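/- arXiv:2007.14655 — 4 statements merged into one kernel-verified Lean document; each statement's English description precedes it below -/
import Mathlib

section
/- Let K be a compact subset of ℝ and let D be a complete and totally bounded metric space with metric d. Let {f_n} be a sequence of continuous functions from K to D. Assume there exists L > 0 such that for every ε > 0 there exists N > 0 such that, for all n ≥ N and all s, t ∈ K, one has d(f_n(t), f_n(s)) ≤ L|t − s| + min{ε, |t − s|}. Then the sequence {f_n} has a uniformly convergent subsequence. -/
open Filter Metric

/-!
Taking `ε = 1` in the hypothesis and bounding the minimum by `|t - s|` shows that all `f n` with
`n ≥ N` are Lipschitz with the common constant `L + 1`. This tail is therefore equicontinuous, and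
`D`, being complete and totally bounded, is compact, so `BoundedContinuousFunction.arzela_ascoli`
makes the closure of the tail compact in the space of bounded continuous functions. Compactness
there is sequential, and convergence there is uniform convergence.
-/

/-- **Revised Arzelà–Ascoli theorem.**
Let `K` be a compact subset of `ℝ` and `D` a complete and totally bounded metric space.
If a sequence `f n` of continuous functions `K → D` satisfies: there is `L > 0` such that
for every `ε > 0` there is `N` with
`d (f n t) (f n s) ≤ L * |t - s| + min ε |t - s|` for all `n ≥ N` and all `s t ∈ K`,
then `f` has a uniformly convergent subsequence. -/
theorem revised_arzela_ascoli
    {D : Type*} [MetricSpace D] [CompleteSpace D]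
    (hD : TotallyBounded (Set.univ : Set D))
    (K : Set ℝ) (hK : IsCompact K)
    (f : ℕ → C(K, D))
    (L : ℝ) (hL : 0 < L)
    (h : ∀ ε > (0 : ℝ), ∃ N : ℕ, ∀ n ≥ N, ∀ s t : K,
      dist (f n t) (f n s) ≤ L * |(t : ℝ) - (s : ℝ)| + min ε |(t : ℝ) - (s : ℝ)|) :
    ∃ φ : ℕ → ℕ, StrictMono φ ∧ ∃ g : K → D,
      TendstoUniformly (fun n (x : K) => f (φ n) x) g atTop := by
  obtain ⟨N, hN⟩ := h 1 one_pos
  have hDc : IsCompact (Set.univ : Set D) := hD.isCompact_of_isClosed isClosed_univ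
  haveI : CompactSpace K := isCompact_iff_compactSpace.mp hK
  let F : ℕ → BoundedContinuousFunction K D :=
    fun n => BoundedContinuousFunction.mkOfCompact (f (N + n))
  have hLip : ∀ n, ∀ s t : K, dist (F n s) (F n t) ≤ (L + 1) * dist s t := by
    intro n s t
    have h1 := hN (N + n) (Nat.le_add_right N n) t s
    have h2 := min_le_right (1 : ℝ) |(s : ℝ) - (t : ℝ)|
    change dist (f (N + n) s) (f (N + n) t) ≤ (L + 1) * |(s : ℝ) - (t : ℝ)|
    linarith
  have hEq : Equicontinuous ((↑) : Set.range F → K → D) := by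
    refine equicontinuous_of_continuity_modulus (fun r => (L + 1) * r) ?_ _ ?_
    · have : Continuous fun r : ℝ => (L + 1) * r := by fun_prop
      simpa using this.tendsto 0
    · rintro s t ⟨_, n, rfl⟩
      exact hLip n s t
  have hA := BoundedContinuousFunction.arzela_ascoli Set.univ hDc (Set.range F)
    (fun _ _ _ => Set.mem_univ _) hEq
  obtain ⟨g, -, ψ, hψ, hlim⟩ :=
    hA.tendsto_subseq (fun n => subset_closure (Set.mem_range_self (f := F) n))
  exact ⟨fun n => N + ψ n, fun a b hab => Nat.add_lt_add_left (hψ hab) N, g,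
    BoundedContinuousFunction.tendsto_iff_tendstoUniformly.mp hlim⟩
end

section
/- Let K be a compact subset of ℝ, D a complete metric space with metric d, and {g_n} a sequence of functions from K to D. Assume: (i) there exists L > 0 such that for every ε > 0 there exists N₁ > 0 such that, for all n ≥ N₁ and all s, t ∈ K, d(g_n(t), g_n(s)) ≤ L|t − s| + min{ε, |t − s|}; and (ii) {g_n(s)} converges in D for every s in a dense subset S of K. Then {g_n} is uniformly Cauchy on K, and hence converges uniformly on K. -/
/-!
Hypothesis (i) with `ε = 1` makes all `g n` with `n` large Lipschitz with the common constant
`L + 1`, hence uniformly equicontinuous. By compactness, finitely many small balls centred at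
points of `S` cover `K`. The sequence is Cauchy at these finitely many centres simultaneously,
and the common Lipschitz bound transports this estimate to every point of `K`. Uniform
convergence then follows from completeness of `D`.
-/

open Filter Metric

/-- Let `K ⊆ ℝ` be compact, `D` a complete metric space, and `g n : K → D` a sequence of
functions such that: (i) there is `L > 0` such that for every `ε > 0` there is `N₁` with
`d (g n t) (g n s) ≤ L * |t - s| + min ε |t - s|` for all `n ≥ N₁` and all `s, t ∈ K`;
(ii) `g n s` converges for every `s` in a dense subset `S` of `K`.  Then `g` is uniformly
Cauchy on `K` and hence converges uniformly on `K`. -/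
theorem uniformly_cauchy_of_asymptotic_lipschitz_and_dense_convergence
    {D : Type*} [MetricSpace D] [CompleteSpace D]
    (K : Set ℝ) (hK : IsCompact K)
    (g : ℕ → K → D)
    (L : ℝ) (hL : 0 < L)
    (h : ∀ ε > (0 : ℝ), ∃ N₁ : ℕ, ∀ n ≥ N₁, ∀ s t : K,
      dist (g n t) (g n s) ≤ L * |(t : ℝ) - (s : ℝ)| + min ε |(t : ℝ) - (s : ℝ)|)
    (S : Set K) (hS : Dense S)
    (hconv : ∀ s ∈ S, ∃ l : D, Tendsto (fun n => g n s) atTop (nhds l)) :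
    UniformCauchySeqOn g atTop Set.univ ∧
      ∃ G : K → D, TendstoUniformly g G atTop := by
  have : CompactSpace K := isCompact_iff_compactSpace.mp hK
  have hC : UniformCauchySeqOn g atTop Set.univ := by
    rw [Metric.uniformCauchySeqOn_iff]
    intro ε hε
    obtain ⟨N₁, hN₁⟩ := h 1 one_pos
    have hlip : ∀ n ≥ N₁, ∀ s t : K, dist (g n t) (g n s) ≤ (L + 1) * dist t s := by
      intro n hn s t
      have h1 := hN₁ n hn s t
      have h2 := min_le_right (1 : ℝ) |(t : ℝ) - (s : ℝ)|
      rw [Subtype.dist_eq, Real.dist_eq]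
      linarith
    -- The radius is chosen so that `(L + 1) * δ = ε / 3`.
    obtain ⟨δ, hδ, hLδ⟩ : ∃ δ > 0, (L + 1) * δ = ε / 3 :=
      ⟨ε / 3 / (L + 1), by positivity, by field_simp⟩
    obtain ⟨F, hFS, hF, hcover⟩ := isCompact_univ.elim_finite_subcover_image (b := S)
      (c := fun s => ball s δ) (fun _ _ => isOpen_ball) (fun t _ => by
        obtain ⟨s, hs, hts⟩ := hS.exists_dist_lt t hδ
        exact Set.mem_biUnion hs hts)
    have hev : ∀ᶠ p : ℕ × ℕ in atTop, ∀ s ∈ F, dist (g p.1 s) (g p.2 s) < ε / 3 := by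
      rw [eventually_all_finite hF]
      intro s hs
      obtain ⟨l, hl⟩ := hconv s (hFS hs)
      obtain ⟨N, hN⟩ := Metric.cauchySeq_iff.mp hl.cauchySeq (ε / 3) (by positivity)
      filter_upwards [eventually_ge_atTop (N, N)] with p hp
      exact hN _ hp.1 _ hp.2
    obtain ⟨⟨a, b⟩, hab⟩ := eventually_atTop.mp hev
    refine ⟨max N₁ (max a b), fun m hm n hn t _ => ?_⟩
    simp only [ge_iff_le, max_le_iff] at hm hn
    obtain ⟨s, hs, hts⟩ := Set.mem_iUnion₂.mp (hcover (Set.mem_univ t))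
    have hts' : (L + 1) * dist t s < ε / 3 := by
      rw [← hLδ]
      exact mul_lt_mul_of_pos_left hts (by positivity)
    have h1 := hlip m hm.1 s t
    have h2 := hlip n hn.1 s t
    have h3 := hab (m, n) ⟨hm.2.1, hn.2.2⟩ s hs
    have h4 := dist_triangle4_right (g m t) (g n t) (g m s) (g n s)
    dsimp only at h3
    linarith
  refine ⟨hC, ?_⟩
  have hpt : ∀ t : K, ∃ l, Tendsto (fun n => g n t) atTop (nhds l) := fun t =>
    cauchySeq_tendsto_of_complete (hC.cauchySeq (Set.mem_univ t))
  choose G hG using hpt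
  exact ⟨G, tendstoUniformlyOn_univ.mp (hC.tendstoUniformlyOn_of_tendsto fun t _ => hG t)⟩
end

section
/- Let H : ℝ^{2d} → ℝ^d be locally Lipschitz and of sub-linear growth, i.e. there is C > 0 with |H(ξ)| ≤ C(1 + |ξ|) for all ξ ∈ ℝ^{2d}. Let R > 0 and let μ, ν : [0, T] → M¹(ℝ^{2d}) be continuous with respect to the generalized Wasserstein distance W₁^{1,1}, with supp μ(t) ⊂ B(0, R) and supp ν(t) ⊂ B(0, R) for every t ∈ [0, T]. Then for every ρ > 0 there exists a constant L_{ρ,R} such that ‖H∗μ(t) − H∗ν(t)‖_{L^∞(B(0,ρ))} ≤ L_{ρ,R}·W₁^{1,1}(μ(t), ν(t)) for all t ∈ [0, T]. -/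
/-!
Kantorovich's easy inequality, with extra terms for the mass that is not transported.  Fix `t` and
`ξ ∈ B(0, ρ)` and put `f ζ = H (ξ - ζ)`.  On `B(0, R)` the function `f` takes arguments of `H` in
the compact ball of radius `ρ + R`, so there `f` is bounded by `M = C (1 + ρ + R)` (growth of `H`)
and `K`-Lipschitz (a locally Lipschitz map is Lipschitz on compact sets), with `M` and `K`
independent of `t` and `ξ`.  A measure supported in `B(0, R)` gives no mass to the complement of
the ball, because the space is second countable.

For submeasures `μ' ≤ μ`, `ν' ≤ ν` of equal mass, the discarded parts `μ - μ'` and `ν - ν'`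
contribute at most `M` times their mass (`norm_integral_sub_le_mass`), and any transference plan
`π` from `μ'` to `ν'` gives `‖∫ f ∂μ' - ∫ f ∂ν'‖ ≤ K ∫ dist ∂π` (`norm_integral_sub_le_plan`).
Taking infima over plans and then over pairs of submeasures yields the bound with constant
`max M K`.  Since an infimum of reals over the empty set is `0`, both steps need an admissible
competitor: the normalized product measure (`exists_plan`) and the pair `(0, 0)`.
-/

open MeasureTheory Filter Metric

noncomputable section

/-- The classical 1-Wasserstein "distance" between two Borel measures of equal mass,
defined as the infimum of transport costs over transference plans. -/
def W1 {E : Type*} [MeasurableSpace E] [PseudoMetricSpace E] (μ ν : Measure E) : ℝ :=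
  sInf {r : ℝ | ∃ π : Measure (E × E),
    π.map Prod.fst = μ ∧ π.map Prod.snd = ν ∧ r = ∫ p, dist p.1 p.2 ∂π}

/-- The generalized Wasserstein distance `W₁^{1,1}` of Piccoli–Rossi. -/
def genW1 {E : Type*} [MeasurableSpace E] [PseudoMetricSpace E] (μ ν : Measure E) : ℝ :=
  sInf {r : ℝ | ∃ μ' ν' : Measure E, μ' ≤ μ ∧ ν' ≤ ν ∧ μ' Set.univ = ν' Set.univ ∧
    r = ((μ Set.univ).toReal - (μ' Set.univ).toReal)
      + ((ν Set.univ).toReal - (ν' Set.univ).toReal) + W1 μ' ν'}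

/-- Support of a Borel measure: points all of whose neighborhoods have positive measure. -/
def msupp {E : Type*} [TopologicalSpace E] [MeasurableSpace E] (μ : Measure E) : Set E :=
  {x | ∀ U ∈ nhds x, μ U ≠ 0}

/-- Convolution of a map `H : ℝ^{2d} → ℝ^d` with a measure: `(H∗μ)(ξ) = ∫ H(ξ − ζ) dμ(ζ)`. -/
def mconv {d : ℕ} (H : EuclideanSpace ℝ (Fin (2 * d)) → EuclideanSpace ℝ (Fin d))
    (μ : Measure (EuclideanSpace ℝ (Fin (2 * d))))
    (ξ : EuclideanSpace ℝ (Fin (2 * d))) : EuclideanSpace ℝ (Fin d) :=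
  ∫ ζ, H (ξ - ζ) ∂μ

section Aux

variable {E F : Type*} [NormedAddCommGroup E] [MeasurableSpace E] [BorelSpace E]
  [SecondCountableTopology E] [NormedAddCommGroup F] [NormedSpace ℝ F]

lemma ae_mem_of_msupp_subset {μ : Measure E} {s : Set E} (h : msupp μ ⊆ s) :
    ∀ᵐ x ∂μ, x ∈ s := by
  rw [ae_iff]
  refine measure_null_of_locally_null _ fun x hx => ?_
  have hx' : x ∉ msupp μ := fun hx' => hx (h hx')
  simp only [msupp, Set.mem_ofPred_eq, not_forall, not_not] at hx'
  obtain ⟨U, hU, hU0⟩ := hx'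
  exact ⟨U, mem_nhdsWithin_of_mem_nhds hU, hU0⟩

/-- Finite measures of equal mass are coupled by their product divided by the common mass
(by the zero measure if that mass vanishes). -/
lemma exists_plan (μ ν : Measure E) [IsFiniteMeasure μ] [IsFiniteMeasure ν]
    (h : μ Set.univ = ν Set.univ) :
    ∃ π : Measure (E × E), π.map Prod.fst = μ ∧ π.map Prod.snd = ν := by
  by_cases h0 : μ Set.univ = 0
  · refine ⟨0, ?_, ?_⟩
    · rw [Measure.map_zero, Measure.measure_univ_eq_zero.1 h0]
    · rw [Measure.map_zero, Measure.measure_univ_eq_zero.1 (h.symm.trans h0)]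
  · have hinv : (μ Set.univ)⁻¹ * μ Set.univ = 1 :=
      ENNReal.inv_mul_cancel h0 (measure_ne_top _ _)
    refine ⟨(μ Set.univ)⁻¹ • μ.prod ν, ?_, ?_⟩
    · rw [Measure.map_smul, Measure.map_fst_prod, ← h, smul_smul, hinv, one_smul]
    · rw [Measure.map_smul, Measure.map_snd_prod, smul_smul, hinv, one_smul]

lemma integrable_of_bound {f : E → F} (hf : Continuous f) {s : Set E} {M : ℝ}
    (hM : ∀ x ∈ s, ‖f x‖ ≤ M) {μ : Measure E} [IsFiniteMeasure μ] (hs : ∀ᵐ x ∂μ, x ∈ s) :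
    Integrable f μ :=
  Integrable.of_bound hf.aestronglyMeasurable M (hs.mono hM)

/-- Passing to a submeasure changes the integral of a function bounded by `M` by at most
`M` times the discarded mass. -/
lemma norm_integral_sub_le_mass {f : E → F} (hf : Continuous f) {s : Set E} {M : ℝ}
    (hM : ∀ x ∈ s, ‖f x‖ ≤ M) {μ μ' : Measure E} [IsFiniteMeasure μ] (hle : μ' ≤ μ)
    (hs : ∀ᵐ x ∂μ, x ∈ s) :
    ‖∫ x, f x ∂μ - ∫ x, f x ∂μ'‖ ≤ M * ((μ Set.univ).toReal - (μ' Set.univ).toReal) := by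
  have : IsFiniteMeasure μ' := isFiniteMeasure_of_le μ hle
  have hs1 : ∀ᵐ x ∂(μ - μ'), x ∈ s := ae_mono Measure.sub_le hs
  have hs2 : ∀ᵐ x ∂μ', x ∈ s := ae_mono hle hs
  have hfin : IsFiniteMeasure (μ - μ') := isFiniteMeasure_of_le μ Measure.sub_le
  have hsplit : ∫ x, f x ∂μ = ∫ x, f x ∂(μ - μ') + ∫ x, f x ∂μ' := by
    rw [← integral_add_measure (integrable_of_bound hf hM hs1) (integrable_of_bound hf hM hs2),
      Measure.sub_add_cancel_of_le hle]
  have hmass : (μ - μ').real Set.univ = (μ Set.univ).toReal - (μ' Set.univ).toReal := by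
    rw [Measure.real, Measure.sub_apply MeasurableSet.univ hle,
      ENNReal.toReal_sub_of_le (hle _) (measure_ne_top _ _)]
  rw [hsplit, add_sub_cancel_right, ← hmass]
  exact norm_integral_le_of_norm_le_const (hs1.mono hM)

lemma norm_integral_sub_le_plan {f : E → F} (hf : Continuous f) {R M : ℝ} {K : NNReal}
    (hM : ∀ x ∈ ball (0 : E) R, ‖f x‖ ≤ M) (hK : LipschitzOnWith K f (ball (0 : E) R))
    {μ ν : Measure E} [IsFiniteMeasure μ] [IsFiniteMeasure ν]
    (hμ : ∀ᵐ x ∂μ, x ∈ ball (0 : E) R) (hν : ∀ᵐ x ∂ν, x ∈ ball (0 : E) R)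
    {π : Measure (E × E)} (h1 : π.map Prod.fst = μ) (h2 : π.map Prod.snd = ν) :
    ‖∫ x, f x ∂μ - ∫ x, f x ∂ν‖ ≤ K * ∫ p, dist p.1 p.2 ∂π := by
  have hπ : IsFiniteMeasure π := by
    constructor
    have : μ Set.univ = π Set.univ := by
      rw [← h1, Measure.map_apply measurable_fst MeasurableSet.univ, Set.preimage_univ]
    rw [← this]
    exact measure_lt_top _ _
  have hf1 := integrable_of_bound hf hM hμ
  have hf2 := integrable_of_bound hf hM hν
  rw [← h1] at hμ hf1 ⊢
  rw [← h2] at hν hf2 ⊢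
  have hp1 := ae_of_ae_map measurable_fst.aemeasurable hμ
  have hp2 := ae_of_ae_map measurable_snd.aemeasurable hν
  have hdist : Integrable (fun p : E × E => dist p.1 p.2) π := by
    refine Integrable.of_bound (C := R + R) (by fun_prop) ?_
    filter_upwards [hp1, hp2] with p hp hp'
    rw [Real.norm_of_nonneg dist_nonneg]
    exact (dist_triangle_right p.1 p.2 0).trans
      (add_le_add (mem_ball.1 hp).le (mem_ball.1 hp').le)
  have hg1 : Integrable (fun p : E × E => f p.1) π := hf1.comp_measurable measurable_fst
  have hg2 : Integrable (fun p : E × E => f p.2) π := hf2.comp_measurable measurable_snd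
  rw [integral_map measurable_fst.aemeasurable hf.aestronglyMeasurable,
    integral_map measurable_snd.aemeasurable hf.aestronglyMeasurable,
    ← integral_sub hg1 hg2, ← integral_const_mul]
  refine norm_integral_le_of_norm_le (hdist.const_mul _) ?_
  filter_upwards [hp1, hp2] with p hp hp'
  rw [← dist_eq_norm]
  exact hK.dist_le_mul _ hp _ hp'

lemma norm_integral_sub_le_genW1 {f : E → F} (hf : Continuous f) {R L : ℝ} {K : NNReal}
    (hL : 0 < L) (hKL : (K : ℝ) ≤ L)
    (hM : ∀ x ∈ ball (0 : E) R, ‖f x‖ ≤ L) (hK : LipschitzOnWith K f (ball (0 : E) R))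
    {μ ν : Measure E} [IsFiniteMeasure μ] [IsFiniteMeasure ν]
    (hμ : ∀ᵐ x ∂μ, x ∈ ball (0 : E) R) (hν : ∀ᵐ x ∂ν, x ∈ ball (0 : E) R) :
    ‖∫ x, f x ∂μ - ∫ x, f x ∂ν‖ ≤ L * genW1 μ ν := by
  rw [← div_le_iff₀' hL]
  refine le_csInf ⟨_, 0, 0, Measure.zero_le _, Measure.zero_le _, rfl, rfl⟩ ?_
  rintro r ⟨μ', ν', hμ', hν', hmass, rfl⟩
  have : IsFiniteMeasure μ' := isFiniteMeasure_of_le μ hμ'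
  have : IsFiniteMeasure ν' := isFiniteMeasure_of_le ν hν'
  have hW : ‖∫ x, f x ∂μ' - ∫ x, f x ∂ν'‖ / L ≤ W1 μ' ν' := by
    obtain ⟨π₀, h1, h2⟩ := exists_plan μ' ν' hmass
    refine le_csInf ⟨_, π₀, h1, h2, rfl⟩ ?_
    rintro r ⟨π, h1, h2, rfl⟩
    rw [div_le_iff₀' hL]
    exact (norm_integral_sub_le_plan hf hM hK (ae_mono hμ' hμ) (ae_mono hν' hν) h1 h2).trans
      (mul_le_mul_of_nonneg_right hKL (integral_nonneg fun p => dist_nonneg))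
  rw [div_le_iff₀' hL] at hW ⊢
  have e1 := norm_integral_sub_le_mass hf hM hμ' hμ
  have e2 := norm_integral_sub_le_mass hf hM hν' hν
  rw [norm_sub_rev] at e2
  have key : ∫ x, f x ∂μ - ∫ x, f x ∂ν = (∫ x, f x ∂μ - ∫ x, f x ∂μ')
      + (∫ x, f x ∂ν' - ∫ x, f x ∂ν) + (∫ x, f x ∂μ' - ∫ x, f x ∂ν') := by abel
  rw [key, mul_add, mul_add]
  exact norm_add₃_le.trans (add_le_add (add_le_add e1 e2) hW)

end Aux

/-- Let `H : ℝ^{2d} → ℝ^d` be locally Lipschitz with sub-linear growth, and let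
`μ, ν : [0,T] → M¹(ℝ^{2d})` be continuous w.r.t. the generalized Wasserstein distance
`W₁^{1,1}` with supports in `B(0,R)`.  Then for every `ρ > 0` there is a constant
`L_{ρ,R}` with `‖H∗μ(t) − H∗ν(t)‖_{L^∞(B(0,ρ))} ≤ L_{ρ,R} · W₁^{1,1}(μ(t), ν(t))`. -/
theorem conv_diff_le_genW1 (d : ℕ)
    (H : EuclideanSpace ℝ (Fin (2 * d)) → EuclideanSpace ℝ (Fin d))
    (hHlip : LocallyLipschitz H)
    (C : ℝ) (hC : 0 < C) (hHgrowth : ∀ ξ, ‖H ξ‖ ≤ C * (1 + ‖ξ‖))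
    (T R : ℝ) (hT : 0 < T) (hR : 0 < R)
    (μ ν : ℝ → Measure (EuclideanSpace ℝ (Fin (2 * d))))
    (hμfin : ∀ t ∈ Set.Icc (0 : ℝ) T, IsFiniteMeasure (μ t))
    (hνfin : ∀ t ∈ Set.Icc (0 : ℝ) T, IsFiniteMeasure (ν t))
    (hμmom : ∀ t ∈ Set.Icc (0 : ℝ) T, Integrable (fun x => ‖x‖) (μ t))
    (hνmom : ∀ t ∈ Set.Icc (0 : ℝ) T, Integrable (fun x => ‖x‖) (ν t))
    (hμcont : ∀ t₀ ∈ Set.Icc (0 : ℝ) T, ∀ ε > (0 : ℝ), ∃ δ > (0 : ℝ),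
      ∀ t ∈ Set.Icc (0 : ℝ) T, |t - t₀| < δ → genW1 (μ t) (μ t₀) < ε)
    (hνcont : ∀ t₀ ∈ Set.Icc (0 : ℝ) T, ∀ ε > (0 : ℝ), ∃ δ > (0 : ℝ),
      ∀ t ∈ Set.Icc (0 : ℝ) T, |t - t₀| < δ → genW1 (ν t) (ν t₀) < ε)
    (hμsupp : ∀ t ∈ Set.Icc (0 : ℝ) T, msupp (μ t) ⊆ Metric.ball 0 R)
    (hνsupp : ∀ t ∈ Set.Icc (0 : ℝ) T, msupp (ν t) ⊆ Metric.ball 0 R) :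
    ∀ ρ > (0 : ℝ), ∃ LρR : ℝ, ∀ t ∈ Set.Icc (0 : ℝ) T,
      ∀ ξ ∈ Metric.ball (0 : EuclideanSpace ℝ (Fin (2 * d))) ρ,
        ‖mconv H (μ t) ξ - mconv H (ν t) ξ‖ ≤ LρR * genW1 (μ t) (ν t) := by
  intro ρ hρ
  obtain ⟨K, hK⟩ := (hHlip.locallyLipschitzOn
    (s := closedBall (0 : EuclideanSpace ℝ (Fin (2 * d))) (ρ + R))).exists_lipschitzOnWith_of_compact
      (isCompact_closedBall _ _)
  have hMpos : 0 < C * (1 + (ρ + R)) := by positivity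
  refine ⟨max (C * (1 + (ρ + R))) K, fun t ht ξ hξ => ?_⟩
  have := hμfin t ht
  have := hνfin t ht
  have hmem : ∀ x ∈ ball (0 : EuclideanSpace ℝ (Fin (2 * d))) R, ‖ξ - x‖ ≤ ρ + R := by
    intro x hx
    rw [mem_ball_zero_iff] at hx hξ
    exact (norm_sub_le _ _).trans (add_le_add hξ.le hx.le)
  refine norm_integral_sub_le_genW1 (K := K) (R := R) (f := fun ζ => H (ξ - ζ))
    (hHlip.continuous.comp (by fun_prop)) (lt_max_of_lt_left hMpos) (le_max_right _ _) ?_ ?_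
    (ae_mem_of_msupp_subset (hμsupp t ht)) (ae_mem_of_msupp_subset (hνsupp t ht))
  · intro x hx
    refine le_max_of_le_left ((hHgrowth _).trans ?_)
    have := hmem x hx
    gcongr
  · refine LipschitzOnWith.of_dist_le_mul fun x hx y hy => ?_
    have := hK.dist_le_mul (ξ - x) (mem_closedBall_zero_iff.2 (hmem x hx)) (ξ - y)
      (mem_closedBall_zero_iff.2 (hmem y hy))
    rwa [dist_sub_left] at this
end
end

section
/- Let H₁ : ℝ × ℝ⁺ → ℝ and H₂ : ℝ × ℝ → ℝ be locally Lipschitz convolution kernels with sub-linear growth. Then, given an initial datum ξ₀ = (ι₀, y₀, w₀, τ₀¹, x₀, v₀, τ₀²) whose initial timers satisfy the pairwise-distinctness condition, there exists a unique trajectory ξ(t) = (ι(t), y(t), w(t), τ¹(t), x(t), v(t), τ²(t)) of the finite-dimensional hybrid system Σ₁ on the whole time interval [0, T]. Furthermore, the trajectories of both the autonomous vehicles and the human-driven vehicles are Lipschitz continuous with respect to time on every time interval on which no lane changing occurs. -/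
/-!
The lane indices change only at the finitely many timer events in `(0, T]`, and distinct initial
timers make at most one vehicle active at each of them, so the lane-changing rule is a
deterministic update computed from the states and from the lanes of the other vehicles
(`LaneRule.exists_res`, `LaneRule.unique`, `LaneRule.congr`).

For prescribed lanes the states solve a Carathéodory equation whose right-hand side is measurable
in time, locally Lipschitz in the state and of linear growth (`caraRHS_hybRHS`). Such an equation
has a solution on all of `[0, T]` (`CaraRHS.exists_sol`: a contraction for a weighted norm on a
tube given by the growth bound), it is Lipschitz in time (`CaraRHS.exists_lipschitz`), and it is
unique (`CaraRHS.unique`). Uniqueness is proved without assuming that the integrands of the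
competitor are integrable: right after the last time of agreement each component of the competitor
is either continuous or frozen at its initial value, so it is bounded and measurable, and hence
the integrals are genuine.

Uniqueness also gives causality (`states_eq_of_lanes_eq`): the states up to time `a` depend only on
the lanes before `a`. Existence of the hybrid trajectory follows by adding the events one at
a time in increasing order (`exists_traj_of_finset`), overwriting the lane of the active vehicle
from the event on; uniqueness follows by looking at the earliest event where two trajectories
would choose different lanes (`lanes_unique`).
-/

open MeasureTheory Filter Metric

noncomputable section

/-- Index type for the `M` autonomous and `N` human-driven vehicles. -/
abbrev Veh (M N : ℕ) := Fin M ⊕ Fin N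

/-- The Euclidean norm of `(x, v) ∈ ℝ²`. -/
def enorm2 (x v : ℝ) : ℝ := Real.sqrt (x ^ 2 + v ^ 2)

/-- The acceleration `(H₁ ∗₁ (μ_{N_j} + ν^j) + H₂ ∗ (μ_{N_j} + ν^j))(a, b)` felt at the
state `(a, b)` on lane `j`, where `μ_{N_j}` and `ν^j` are the empirical measures of the
human-driven and autonomous vehicles currently on lane `j` (given by the lane assignment
`lane` and the states `pos`, `vel`). -/
def hybAcc (H₁ H₂ : ℝ → ℝ → ℝ) {M N : ℕ} (lane : Veh M N → ℤ)
    (pos vel : Veh M N → ℝ) (j : ℤ) (a b : ℝ) : ℝ :=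
  (((Finset.univ.filter fun i : Fin N => lane (Sum.inr i) = j).card : ℝ))⁻¹ *
    ∑ i ∈ Finset.univ.filter (fun i : Fin N => lane (Sum.inr i) = j),
      (H₁ (a - pos (Sum.inr i)) b + H₂ (a - pos (Sum.inr i)) (b - vel (Sum.inr i)))
  + (((Finset.univ.filter fun k : Fin M => lane (Sum.inl k) = j).card : ℝ))⁻¹ *
    ∑ k ∈ Finset.univ.filter (fun k : Fin M => lane (Sum.inl k) = j),
      (H₁ (a - pos (Sum.inl k)) b + H₂ (a - pos (Sum.inl k)) (b - vel (Sum.inl k)))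

/-- `(lane, pos, vel)` is a trajectory of the finite-dimensional hybrid system `Σ₁` on
`[0, T]` with `m` lanes, timer limit `T₁`, lane-changing threshold `Δ`, controls `u` on
the autonomous vehicles, initial timers `τ₀`, initial lanes `ι₀` and initial states
`(pos₀, vel₀)`.  The conditions collect: initial data; piecewise constancy of the lane
indices between two consecutive timer events of each vehicle (the timers evolve with
rate `1` and are reset to `0` at the timer limit, so the timer of vehicle `n` vanishes
exactly at the times `t` with `(t + τ₀ n)/T₁ ∈ ℤ`); validity of the lane indices;
the Carathéodory (integral-form) continuous dynamics, which also forces continuity of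
positions and velocities across lane changes; and the lane-changing rules (safety and
incentive conditions, with ties broken towards the right lane) at each timer event. -/
def IsHybridTraj (H₁ H₂ : ℝ → ℝ → ℝ) (m : ℕ) (T T₁ Δ : ℝ) {M N : ℕ}
    (u : Fin M → ℝ → ℝ) (τ₀ : Veh M N → ℝ) (ι₀ : Veh M N → ℤ)
    (pos₀ vel₀ : Veh M N → ℝ)
    (lane : Veh M N → ℝ → ℤ) (pos vel : Veh M N → ℝ → ℝ) : Prop :=
  let ctrl : Veh M N → ℝ → ℝ := Sum.elim u fun _ _ => 0
  -- initial conditions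
  (∀ n, lane n 0 = ι₀ n ∧ pos n 0 = pos₀ n ∧ vel n 0 = vel₀ n) ∧
  -- the lane indices are admissible
  (∀ n t, 1 ≤ lane n t ∧ lane n t ≤ (m : ℤ)) ∧
  -- the lane index is constant between two consecutive timer events of the vehicle
  (∀ n, ∀ s t : ℝ, ⌊(s + τ₀ n) / T₁⌋ = ⌊(t + τ₀ n) / T₁⌋ → lane n s = lane n t) ∧
  -- continuous (Carathéodory) dynamics between and across the discrete events
  (∀ n, ∀ t ∈ Set.Icc (0 : ℝ) T,
    pos n t = pos₀ n + ∫ s in (0 : ℝ)..t, vel n s ∧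
    vel n t = vel₀ n + ∫ s in (0 : ℝ)..t,
      (hybAcc H₁ H₂ (fun n' => lane n' s) (fun n' => pos n' s) (fun n' => vel n' s)
        (lane n s) (pos n s) (vel n s) + ctrl n s)) ∧
  -- discrete lane-changing dynamics at the timer events of each vehicle
  (∀ n, ∀ t ∈ Set.Ioc (0 : ℝ) T, (∃ q : ℤ, t + τ₀ n = q * T₁) →
    -- the lane occupied before the event
    let jold : ℤ := lane n (max 0 (t - T₁ / 2))
    -- lane assignments with vehicle `n` kept on its old lane / moved to lane `j'`
    let laneOld : Veh M N → ℤ := Function.update (fun n' => lane n' t) n jold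
    let laneNew : ℤ → Veh M N → ℤ := fun j' => Function.update (fun n' => lane n' t) n j'
    -- actual acceleration of vehicle `n` on its current lane
    let acur : ℝ := hybAcc H₁ H₂ laneOld (fun n' => pos n' t) (fun n' => vel n' t)
      jold (pos n t) (vel n t) + ctrl n t
    -- expected acceleration of vehicle `n` if it changes to lane `j'`
    let abar : ℤ → ℝ := fun j' => hybAcc H₁ H₂ laneOld (fun n' => pos n' t)
      (fun n' => vel n' t) j' (pos n t) (vel n t) + ctrl n t
    -- `l` is the first vehicle following vehicle `n` on lane `j'`
    let follower : ℤ → Veh M N → Prop := fun j' l =>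
      l ≠ n ∧ lane l t = j' ∧ pos l t < pos n t ∧
        ∀ l', l' ≠ n → lane l' t = j' → pos l' t < pos n t → pos l' t ≤ pos l t
    -- expected acceleration of the follower `l` if vehicle `n` changes to lane `j'`
    let abarFol : ℤ → Veh M N → ℝ := fun j' l =>
      hybAcc H₁ H₂ (laneNew j') (fun n' => pos n' t) (fun n' => vel n' t)
        j' (pos l t) (vel l t) + ctrl l t
    -- safety and incentive conditions for a lane change to lane `j'`
    let ok : ℤ → Prop := fun j' =>
      1 ≤ j' ∧ j' ≤ (m : ℤ) ∧ -Δ ≤ abar j' ∧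
        (∀ l, follower j' l → -Δ ≤ abarFol j' l) ∧ acur + Δ ≤ abar j'
    -- the lane-changing rule, with ties broken towards lane `jold + 1`
    ((ok (jold + 1) ∧ (¬ ok (jold - 1) ∨ abar (jold - 1) ≤ abar (jold + 1))) →
        lane n t = jold + 1) ∧
    ((¬ (ok (jold + 1) ∧ (¬ ok (jold - 1) ∨ abar (jold - 1) ≤ abar (jold + 1))) ∧
        ok (jold - 1)) → lane n t = jold - 1) ∧
    ((¬ ok (jold + 1) ∧ ¬ ok (jold - 1)) → lane n t = jold))

/-! ### Carathéodory differential equations -/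

/-- Right-hand sides `F : ℝ → ℝ^κ → ℝ^κ` (sup norm) of Carathéodory differential equations:
jointly measurable, of linear growth with constants `A`, `B`, and Lipschitz in the state on
bounded sets, uniformly in time. -/
structure CaraRHS {κ : Type*} [Fintype κ] (F : ℝ → (κ → ℝ) → κ → ℝ) (A B : ℝ) : Prop where
  meas : Measurable (fun p : ℝ × (κ → ℝ) => F p.1 p.2)
  A_nonneg : 0 ≤ A
  one_le_B : 1 ≤ B
  growth : ∀ t x, ‖F t x‖ ≤ A + B * ‖x‖
  lip : ∀ R : ℝ, ∃ K : ℝ, 0 ≤ K ∧ ∀ t x y, ‖x‖ ≤ R → ‖y‖ ≤ R →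
    ‖F t x - F t y‖ ≤ K * ‖x - y‖

/-- `η` satisfies the integral form of `η' = F(t, η)`, `η(0) = x₀` on `[0, T]`, with the
convention that a non-integrable integrand has integral `0`; integrability is not required. -/
def IntSol {κ : Type*} (F : ℝ → (κ → ℝ) → κ → ℝ) (x₀ : κ → ℝ) (T : ℝ)
    (η : ℝ → κ → ℝ) : Prop :=
  ∀ t ∈ Set.Icc (0 : ℝ) T, ∀ i, η t i = x₀ i + ∫ s in (0 : ℝ)..t, F s (η s) i

section Caratheodory

variable {κ : Type*} [Fintype κ] {F : ℝ → (κ → ℝ) → κ → ℝ} {A B : ℝ}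

lemma CaraRHS.intervalIntegrable (hF : CaraRHS F A B) {η : ℝ → κ → ℝ} {a b R : ℝ} (hab : a ≤ b)
    (hm : AEMeasurable η (volume.restrict (Set.Ioc a b)))
    (hb : ∀ t ∈ Set.Ioc a b, ‖η t‖ ≤ R) (i : κ) :
    IntervalIntegrable (fun s => F s (η s) i) volume a b := by
  rw [intervalIntegrable_iff_integrableOn_Ioc_of_le hab]
  refine Integrable.of_bound (C := A + B * R) ?_ ?_
  · exact (((measurable_pi_apply i).comp hF.meas).comp_aemeasurable
      (aemeasurable_id.prodMk hm)).aestronglyMeasurable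
  · refine (ae_restrict_iff' measurableSet_Ioc).2 (ae_of_all _ fun t ht => ?_)
    have := hF.one_le_B
    calc ‖F t (η t) i‖ ≤ ‖F t (η t)‖ := norm_le_pi_norm _ i
      _ ≤ A + B * ‖η t‖ := hF.growth _ _
      _ ≤ A + B * R := by gcongr; exact hb t ht

lemma CaraRHS.intervalIntegrable_of_continuous (hF : CaraRHS F A B) {γ : ℝ → κ → ℝ}
    (hγ : Continuous γ) (a b : ℝ) (i : κ) :
    IntervalIntegrable (fun s => F s (γ s) i) volume a b := by
  wlog hab : a ≤ b generalizing a b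
  · exact (this b a (le_of_not_ge hab)).symm
  obtain ⟨R, hR⟩ := isCompact_Icc.exists_bound_of_continuousOn (s := Set.Icc a b) hγ.continuousOn
  exact hF.intervalIntegrable hab hγ.measurable.aemeasurable
    (fun t ht => hR t (Set.Ioc_subset_Icc_self ht)) i

/-- Just after a time `x` up to which an integral solution `η` agrees with a continuous one,
`η` is still measurable and bounded: either the integrand of a component stays integrable,
and that component is continuous, or it fails to be integrable on `[0, t]` for every `t > x`, and
that component is constant. -/
lemma IntSol.regular_after {T x y : ℝ} {x₀ : κ → ℝ}
    {γ η : ℝ → κ → ℝ} (hη : IntSol F x₀ T η) (hγc : Continuous γ)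
    (hx : x ∈ Set.Ico 0 T) (hxy : x < y) (heq : ∀ r ∈ Set.Icc 0 x, η r = γ r) :
    ∃ e ∈ Set.Ioc x (min y T), AEMeasurable η (volume.restrict (Set.Ioc 0 e)) ∧
      ∃ R, ∀ r ∈ Set.Icc 0 e, ‖η r‖ ≤ R := by
  have h1 : ∀ᶠ e in nhdsWithin x (Set.Ioi x), ∀ i,
      IntervalIntegrable (fun s => F s (η s) i) volume 0 e ∨
      ∀ t ∈ Set.Ioc x e, ¬ IntervalIntegrable (fun s => F s (η s) i) volume 0 t := by
    rw [eventually_all]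
    intro i
    by_cases h : ∃ t, x < t ∧ IntervalIntegrable (fun s => F s (η s) i) volume 0 t
    · obtain ⟨t, hxt, ht⟩ := h
      filter_upwards [Ioc_mem_nhdsGT hxt] with e he
      left
      have h0 : 0 ≤ x := hx.1
      refine ht.mono_set ?_
      rw [Set.uIcc_of_le (h0.trans he.1.le), Set.uIcc_of_le (h0.trans hxt.le)]
      exact Set.Icc_subset_Icc_right he.2
    · push Not at h
      exact Eventually.of_forall fun e => Or.inr fun t ht => h t ht.1
  obtain ⟨e, he, hemem⟩ := (h1.and (Ioc_mem_nhdsGT (lt_min hxy hx.2))).exists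
  have hx0 : 0 ≤ x := hx.1
  have hxe : x < e := hemem.1
  have heT : e ≤ T := hemem.2.trans (min_le_right _ _)
  have h0e : 0 ≤ e := hx0.trans hxe.le
  have hcomp : ∀ i, AEMeasurable (fun r => η r i) (volume.restrict (Set.Ioc 0 e)) ∧
      ∃ R, ∀ r ∈ Set.Icc 0 e, ‖η r i‖ ≤ R := by
    intro i
    rcases he i with hi | hi
    · have hc : ContinuousOn (fun r => η r i) (Set.Icc 0 e) := by
        have h2 : ContinuousOn (fun r => x₀ i + ∫ s in (0 : ℝ)..r, F s (η s) i)
            (Set.Icc 0 e) := by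
          have := intervalIntegral.continuousOn_primitive_interval' hi Set.left_mem_uIcc
          rw [Set.uIcc_of_le h0e] at this
          exact continuousOn_const.add this
        exact h2.congr fun r hr => hη r ⟨hr.1, hr.2.trans heT⟩ i
      refine ⟨(hc.mono Set.Ioc_subset_Icc_self).aemeasurable measurableSet_Ioc,
        isCompact_Icc.exists_bound_of_continuousOn hc⟩
    · have hval : ∀ r ∈ Set.Icc 0 e, η r i = if r ≤ x then γ r i else x₀ i := by
        intro r hr
        split_ifs with h
        · rw [heq r ⟨hr.1, h⟩]
        · rw [hη r ⟨hr.1, hr.2.trans heT⟩ i,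
            intervalIntegral.integral_undef (hi r ⟨not_le.1 h, hr.2⟩), add_zero]
      have hγi : Continuous fun r => γ r i := (continuous_apply i).comp hγc
      constructor
      · have hm : Measurable fun r : ℝ => if r ≤ x then γ r i else x₀ i :=
          Measurable.ite measurableSet_Iic hγi.measurable measurable_const
        refine hm.aemeasurable.congr ?_
        refine (ae_restrict_iff' measurableSet_Ioc).2 (ae_of_all _ fun r hr => ?_)
        exact (hval r (Set.Ioc_subset_Icc_self hr)).symm
      · obtain ⟨R, hR⟩ := isCompact_Icc.exists_bound_of_continuousOn (s := Set.Icc 0 e)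
          hγi.continuousOn
        refine ⟨R + ‖x₀ i‖, fun r hr => ?_⟩
        have h3 := hR r hr
        have h4 := norm_nonneg (γ r i)
        have h5 := norm_nonneg (x₀ i)
        rw [hval r hr]
        split_ifs <;> linarith
  choose hmeas R hR using hcomp
  refine ⟨e, hemem, aemeasurable_pi_iff.2 hmeas, ∑ i, |R i|, fun r hr => ?_⟩
  refine (pi_norm_le_iff_of_nonneg (Finset.sum_nonneg fun i _ => abs_nonneg _)).2 fun i => ?_
  calc ‖η r i‖ ≤ R i := hR i r hr
    _ ≤ |R i| := le_abs_self _
    _ ≤ ∑ i, |R i| := Finset.single_le_sum (f := fun i => |R i|)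
        (fun i _ => abs_nonneg _) (Finset.mem_univ i)

/-- Local uniqueness on an interval so short that the integral operator is a
contraction with constant `1/2`. -/
lemma CaraRHS.unique_step (hF : CaraRHS F A B) {T x y : ℝ} {x₀ : κ → ℝ}
    {γ η : ℝ → κ → ℝ} (hγc : Continuous γ) (hγ : IntSol F x₀ T γ) (hη : IntSol F x₀ T η)
    (hx : x ∈ Set.Ico 0 T) (hxy : x < y) (heq : ∀ r ∈ Set.Icc 0 x, η r = γ r) :
    ∃ z ∈ Set.Ioc x y, ∀ r ∈ Set.Icc 0 z, η r = γ r := by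
  obtain ⟨e, he, hm, R₁, hR₁⟩ := hη.regular_after hγc hx hxy heq
  obtain ⟨R₂, hR₂⟩ := isCompact_Icc.exists_bound_of_continuousOn (s := Set.Icc 0 e)
    hγc.continuousOn
  obtain ⟨K, hK0, hK⟩ := hF.lip (max R₁ R₂)
  have hx0 : 0 ≤ x := hx.1
  have hxe : x < e := he.1
  have heT : e ≤ T := he.2.trans (min_le_right _ _)
  have h0e : 0 ≤ e := hx0.trans hxe.le
  have hδ : 0 < 1 / (2 * (K + 1)) := by positivity
  set z := min e (x + 1 / (2 * (K + 1))) with hz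
  have hze : z ≤ e := min_le_left _ _
  have hxz : x < z := lt_min hxe (by linarith)
  refine ⟨z, ⟨hxz, hze.trans (he.2.trans (min_le_left _ _))⟩, ?_⟩
  have hIη : ∀ i, IntervalIntegrable (fun s => F s (η s) i) volume 0 e := fun i =>
    hF.intervalIntegrable h0e hm (fun t ht => hR₁ t (Set.Ioc_subset_Icc_self ht)) i
  have hIγ := fun a b i => hF.intervalIntegrable_of_continuous hγc a b i
  have hbound : ∀ n : ℕ, ∀ r ∈ Set.Icc 0 z, ‖η r - γ r‖ ≤ (R₁ + R₂) * (1 / 2) ^ n := by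
    intro n
    induction n with
    | zero =>
      intro r hr
      have hr' : r ∈ Set.Icc 0 e := ⟨hr.1, hr.2.trans hze⟩
      simpa using (norm_sub_le _ _).trans (add_le_add (hR₁ r hr') (hR₂ r hr'))
    | succ n ih =>
      have hD : 0 ≤ (R₁ + R₂) * (1 / 2) ^ n :=
        (norm_nonneg _).trans (ih 0 ⟨le_rfl, hx0.trans hxz.le⟩)
      intro r hr
      rw [pow_succ, ← mul_assoc]
      set D := (R₁ + R₂) * (1 / 2) ^ n with hDdef
      rcases le_or_gt r x with hrx | hrx
      · rw [heq r ⟨hr.1, hrx⟩, sub_self, norm_zero]; positivity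
      have hre : r ≤ e := hr.2.trans hze
      refine (pi_norm_le_iff_of_nonneg (by positivity)).2 fun i => ?_
      have hI1 : IntervalIntegrable (fun s => F s (η s) i - F s (γ s) i) volume 0 r := by
        refine ((hIη i).mono_set ?_).sub (hIγ 0 r i)
        rw [Set.uIcc_of_le h0e, Set.uIcc_of_le hr.1]
        exact Set.Icc_subset_Icc_right hre
      have hsub : ∀ a b, 0 ≤ a → a ≤ b → b ≤ r →
          IntervalIntegrable (fun s => F s (η s) i - F s (γ s) i) volume a b := by
        intro a b ha hab hb
        refine hI1.mono_set ?_
        rw [Set.uIcc_of_le hab, Set.uIcc_of_le hr.1]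
        exact Set.Icc_subset_Icc ha hb
      have hzero : ∫ s in (0 : ℝ)..x, (F s (η s) i - F s (γ s) i) = 0 := by
        rw [intervalIntegral.integral_congr (g := fun _ => (0 : ℝ))]
        · simp
        · intro s hs
          rw [Set.uIcc_of_le hx0] at hs
          simp [heq s hs]
      have hdiff : (η r - γ r) i = ∫ s in x..r, (F s (η s) i - F s (γ s) i) := by
        have hrT : r ∈ Set.Icc 0 T := ⟨hr.1, hre.trans heT⟩
        have h1 := intervalIntegral.integral_add_adjacent_intervals
          (hsub 0 x le_rfl hx0 hrx.le) (hsub x r hx0 hrx.le le_rfl)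
        rw [hzero, zero_add] at h1
        rw [h1, intervalIntegral.integral_sub _ (hIγ 0 r i), Pi.sub_apply, hη r hrT i,
          hγ r hrT i]
        · ring
        · refine (hIη i).mono_set ?_
          rw [Set.uIcc_of_le h0e, Set.uIcc_of_le hr.1]
          exact Set.Icc_subset_Icc_right hre
      rw [hdiff]
      have h2 : ‖∫ s in x..r, (F s (η s) i - F s (γ s) i)‖ ≤ K * D * |r - x| := by
        refine intervalIntegral.norm_integral_le_of_norm_le_const fun s hs => ?_
        rw [Set.uIoc_of_le hrx.le] at hs
        have hs0 : s ∈ Set.Icc 0 z := ⟨hx0.trans hs.1.le, hs.2.trans hr.2⟩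
        have hs1 : s ∈ Set.Icc 0 e := ⟨hs0.1, hs0.2.trans hze⟩
        calc ‖F s (η s) i - F s (γ s) i‖ = ‖(F s (η s) - F s (γ s)) i‖ := rfl
          _ ≤ ‖F s (η s) - F s (γ s)‖ := norm_le_pi_norm _ i
          _ ≤ K * ‖η s - γ s‖ := hK _ _ _ ((hR₁ s hs1).trans (le_max_left _ _))
              ((hR₂ s hs1).trans (le_max_right _ _))
          _ ≤ K * D := by gcongr; exact ih s hs0
      refine h2.trans ?_
      have h3 : |r - x| ≤ 1 / (2 * (K + 1)) := by
        rw [abs_of_pos (by linarith)]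
        have : z ≤ x + 1 / (2 * (K + 1)) := min_le_right _ _
        linarith [hr.2]
      have h4 : K * (1 / (2 * (K + 1))) ≤ 1 / 2 := by
        rw [mul_one_div, div_le_div_iff₀ (by positivity) (by norm_num)]; linarith
      calc K * D * |r - x| ≤ K * D * (1 / (2 * (K + 1))) := by gcongr
        _ = D * (K * (1 / (2 * (K + 1)))) := by ring
        _ ≤ D * (1 / 2) := by gcongr
  intro r hr
  have hlim : Tendsto (fun n : ℕ => (R₁ + R₂) * (1 / 2 : ℝ) ^ n) atTop (nhds 0) := by
    simpa using (tendsto_pow_atTop_nhds_zero_of_lt_one (r := (1 / 2 : ℝ)) (by norm_num)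
      (by norm_num)).const_mul (R₁ + R₂)
  have h5 : ‖η r - γ r‖ ≤ 0 := ge_of_tendsto' hlim fun n => hbound n r hr
  exact sub_eq_zero.1 (norm_le_zero_iff.1 h5)

/-- An integral solution, with no integrability assumption, coincides with a continuous
one. In particular the convention `∫ f = 0` for non-integrable `f` creates no further solutions. -/
lemma CaraRHS.unique (hF : CaraRHS F A B) {T : ℝ} {x₀ : κ → ℝ}
    {γ η : ℝ → κ → ℝ} (hγc : Continuous γ) (hγ : IntSol F x₀ T γ) (hη : IntSol F x₀ T η) :
    ∀ t ∈ Set.Icc 0 T, η t = γ t := by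
  have hleft : ∀ t ∈ Set.Icc 0 T, (∀ r ∈ Set.Ico 0 t, η r = γ r) → η t = γ t := by
    intro t ht h
    ext i
    rw [hη t ht i, hγ t ht i]
    congr 1
    refine intervalIntegral.integral_congr_Ioo_of_le ht.1 fun s hs => ?_
    simp [h s ⟨hs.1.le, hs.2⟩]
  intro t ht
  have h0T : (0 : ℝ) ≤ T := ht.1.trans ht.2
  have key : Set.Icc 0 T ⊆ {t | ∀ r ∈ Set.Icc 0 t, η r = γ r} := by
    refine IsClosed.Icc_subset_of_forall_exists_gt ?_ ?_ ?_
    · refine isClosed_of_closure_subset fun t ht => ?_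
      have htI : t ∈ Set.Icc 0 T := by
        have := closure_mono Set.inter_subset_right ht
        rwa [isClosed_Icc.closure_eq] at this
      have hlt : ∀ r ∈ Set.Ico 0 t, η r = γ r := by
        intro r hr
        obtain ⟨t', ht', hS⟩ := mem_closure_iff.1 ht (Set.Ioi r) isOpen_Ioi hr.2
        exact hS.1 r ⟨hr.1, le_of_lt ht'⟩
      refine ⟨fun r hr => ?_, htI⟩
      rcases hr.2.lt_or_eq with h | h
      · exact hlt r ⟨hr.1, h⟩
      · subst h; exact hleft r htI hlt
    · intro r hr
      have : r = 0 := le_antisymm hr.2 hr.1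
      subst this
      exact hleft 0 ⟨le_rfl, h0T⟩ fun r hr => absurd hr.2 (not_lt.2 hr.1)
    · intro x hx y hy
      obtain ⟨z, hz, hzeq⟩ := hF.unique_step hγc hγ hη hx.2 hy hx.1
      exact ⟨z, hzeq, hz⟩
  exact key ht t ⟨ht.1, le_rfl⟩

/-- Existence on all of `[0, T]`. Banach's fixed point theorem is applied to
`g(t) = exp (-L t) γ(t)` with `L > 2 K`, which makes the integral operator a contraction with
constant `1/2`, on the invariant set `‖γ(t)‖ ≤ R₀ exp (2 B t)` given by the linear growth;
`K` is a Lipschitz constant of `F` on the ball containing that set. -/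
lemma CaraRHS.exists_sol (hF : CaraRHS F A B) {T : ℝ} (hT : 0 ≤ T) (x₀ : κ → ℝ) :
    ∃ γ : ℝ → κ → ℝ, Continuous γ ∧ IntSol F x₀ T γ := by
  have hA := hF.A_nonneg
  have hB := hF.one_le_B
  set R₀ : ℝ := 2 * (‖x₀‖ + A * T) with hR₀
  have hR₀0 : 0 ≤ R₀ := by positivity
  obtain ⟨K, hK0, hK⟩ := hF.lip (R₀ * Real.exp (2 * B * T))
  set L : ℝ := 2 * K + 1 with hL
  have hL0 : 0 < L := by positivity
  let ext : C(Set.Icc (0 : ℝ) T, κ → ℝ) → ℝ → κ → ℝ :=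
    fun g s => Real.exp (L * s) • g (Set.projIcc 0 T hT s)
  have hext : ∀ g, Continuous (ext g) := fun g => by
    have := g.continuous.comp (continuous_projIcc (h := hT))
    exact (Real.continuous_exp.comp (continuous_const.mul continuous_id)).smul this
  have hI := fun g a b i => hF.intervalIntegrable_of_continuous (hext g) a b i
  let Φ : C(Set.Icc (0 : ℝ) T, κ → ℝ) → C(Set.Icc (0 : ℝ) T, κ → ℝ) := fun g =>
    ⟨fun t i => Real.exp (-(L * t)) * (x₀ i + ∫ s in (0 : ℝ)..t, F s (ext g s) i), by
      refine continuous_pi fun i => ?_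
      have := (intervalIntegral.continuous_primitive (fun a b => hI g a b i) 0).comp
        (continuous_subtype_val (p := fun t => t ∈ Set.Icc (0 : ℝ) T))
      exact (Real.continuous_exp.comp (by fun_prop)).mul (continuous_const.add this)⟩
  let S : Set C(Set.Icc (0 : ℝ) T, κ → ℝ) :=
    {g | ∀ t : Set.Icc (0 : ℝ) T, ‖g t‖ ≤ Real.exp (-(L * t)) * (R₀ * Real.exp (2 * B * t))}
  have hSext : ∀ g ∈ S, ∀ s ∈ Set.Icc (0 : ℝ) T, ‖ext g s‖ ≤ R₀ * Real.exp (2 * B * s) := by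
    intro g hg s hs
    have h1 := hg ⟨s, hs⟩
    simp only [ext, Set.projIcc_of_mem hT hs, norm_smul, Real.norm_eq_abs, Real.abs_exp]
    calc _ ≤ Real.exp (L * s) * (Real.exp (-(L * s)) * (R₀ * Real.exp (2 * B * s))) := by
          gcongr
      _ = _ := by rw [← mul_assoc, ← Real.exp_add]; simp
  have hSext' : ∀ g ∈ S, ∀ s ∈ Set.Icc (0 : ℝ) T, ‖ext g s‖ ≤ R₀ * Real.exp (2 * B * T) := by
    intro g hg s hs
    refine (hSext g hg s hs).trans ?_
    gcongr
    exact hs.2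
  have hSclosed : IsClosed S := by
    have : S = ⋂ t : Set.Icc (0 : ℝ) T,
        {g | ‖g t‖ ≤ Real.exp (-(L * t)) * (R₀ * Real.exp (2 * B * t))} := by
      ext g; simp [S]
    rw [this]
    exact isClosed_iInter fun t => isClosed_le (continuous_eval_const t).norm continuous_const
  have hmaps : Set.MapsTo Φ S S := by
    intro g hg t
    have ht := t.2
    refine (pi_norm_le_iff_of_nonneg (by positivity)).2 fun i => ?_
    have hint : ∫ s in (0 : ℝ)..t, (A + B * (R₀ * Real.exp (2 * B * s))) =
        (A * t + R₀ / 2 * Real.exp (2 * B * t)) - (A * 0 + R₀ / 2 * Real.exp (2 * B * 0)) := by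
      refine intervalIntegral.integral_eq_sub_of_hasDerivAt
        (f := fun s => A * s + R₀ / 2 * Real.exp (2 * B * s)) (fun s _ => ?_)
        (Continuous.intervalIntegrable (by fun_prop) _ _)
      have h1 : HasDerivAt (fun s : ℝ => 2 * B * s) (2 * B) s := by
        simpa using (hasDerivAt_id s).const_mul (2 * B)
      have h2 := ((hasDerivAt_id s).const_mul A).add (h1.exp.const_mul (R₀ / 2))
      convert! h2 using 1
      ring
    have hle : ‖∫ s in (0 : ℝ)..t, F s (ext g s) i‖ ≤
        ∫ s in (0 : ℝ)..t, (A + B * (R₀ * Real.exp (2 * B * s))) := by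
      refine intervalIntegral.norm_integral_le_of_norm_le ht.1 (ae_of_all _ fun s hs => ?_)
        (Continuous.intervalIntegrable (by fun_prop) _ _)
      calc ‖F s (ext g s) i‖ ≤ ‖F s (ext g s)‖ := norm_le_pi_norm _ i
        _ ≤ A + B * ‖ext g s‖ := hF.growth _ _
        _ ≤ _ := by
          gcongr
          exact hSext g hg s ⟨hs.1.le, hs.2.trans ht.2⟩
    have hx : ‖x₀ i‖ ≤ ‖x₀‖ := norm_le_pi_norm _ i
    have h1 : ‖x₀ i + ∫ s in (0 : ℝ)..t, F s (ext g s) i‖ ≤ R₀ * Real.exp (2 * B * t) := by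
      refine (norm_add_le _ _).trans ((add_le_add hx (hle.trans_eq hint)).trans ?_)
      have h2 : 1 ≤ Real.exp (2 * B * t) := Real.one_le_exp (by have := ht.1; positivity)
      have h3 : A * t ≤ A * T := by gcongr; exact ht.2
      simp only [mul_zero, Real.exp_zero, mul_one, zero_add]
      nlinarith
    change ‖Real.exp (-(L * t)) * (x₀ i + ∫ s in (0 : ℝ)..t, F s (ext g s) i)‖ ≤ _
    rw [norm_mul, Real.norm_eq_abs, Real.abs_exp]
    gcongr
  have hcontr : ∀ g ∈ S, ∀ h ∈ S, dist (Φ g) (Φ h) ≤ (1 / 2 : ℝ) * dist g h := by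
    intro g hg h hh
    refine (ContinuousMap.dist_le (by positivity)).2 fun t => ?_
    have ht := t.2
    rw [dist_eq_norm]
    refine (pi_norm_le_iff_of_nonneg (by positivity)).2 fun i => ?_
    have hint : ∫ s in (0 : ℝ)..t, (K * dist g h * Real.exp (L * s)) =
        (K * dist g h / L * Real.exp (L * t)) - (K * dist g h / L * Real.exp (L * 0)) := by
      refine intervalIntegral.integral_eq_sub_of_hasDerivAt
        (f := fun s => K * dist g h / L * Real.exp (L * s)) (fun s _ => ?_)
        (Continuous.intervalIntegrable (by fun_prop) _ _)
      have h1 : HasDerivAt (fun s : ℝ => L * s) L s := by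
        simpa using (hasDerivAt_id s).const_mul L
      have h2 := h1.exp.const_mul (K * dist g h / L)
      convert! h2 using 1
      field_simp
    have hle : ‖∫ s in (0 : ℝ)..t, (F s (ext g s) i - F s (ext h s) i)‖ ≤
        ∫ s in (0 : ℝ)..t, (K * dist g h * Real.exp (L * s)) := by
      refine intervalIntegral.norm_integral_le_of_norm_le ht.1 (ae_of_all _ fun s hs => ?_)
        (Continuous.intervalIntegrable (by fun_prop) _ _)
      have hsT : s ∈ Set.Icc 0 T := ⟨hs.1.le, hs.2.trans ht.2⟩
      calc ‖F s (ext g s) i - F s (ext h s) i‖ = ‖(F s (ext g s) - F s (ext h s)) i‖ := rfl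
        _ ≤ ‖F s (ext g s) - F s (ext h s)‖ := norm_le_pi_norm _ i
        _ ≤ K * ‖ext g s - ext h s‖ := hK _ _ _ (hSext' g hg s hsT) (hSext' h hh s hsT)
        _ ≤ K * (Real.exp (L * s) * dist g h) := by
          gcongr
          simp only [ext]
          rw [← smul_sub, norm_smul, Real.norm_eq_abs, Real.abs_exp, ← dist_eq_norm]
          gcongr
          exact ContinuousMap.dist_apply_le_dist _
        _ = _ := by ring
    change ‖Real.exp (-(L * t)) * (x₀ i + ∫ s in (0 : ℝ)..t, F s (ext g s) i) -
      Real.exp (-(L * t)) * (x₀ i + ∫ s in (0 : ℝ)..t, F s (ext h s) i)‖ ≤ _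
    rw [← mul_sub, add_sub_add_left_eq_sub, ← intervalIntegral.integral_sub (hI g _ _ i)
      (hI h _ _ i), norm_mul, Real.norm_eq_abs, Real.abs_exp]
    have hd : 0 ≤ dist g h := dist_nonneg
    have hKL : K / L ≤ 1 / 2 := by
      rw [div_le_div_iff₀ hL0 (by norm_num)]; linarith
    have hKd : 0 ≤ K * dist g h / L := by positivity
    calc _ ≤ Real.exp (-(L * t)) * (K * dist g h / L * Real.exp (L * t)) := by
          gcongr
          refine (hle.trans_eq hint).trans ?_
          simpa using hKd
      _ = (K / L) * dist g h * (Real.exp (-(L * t)) * Real.exp (L * t)) := by ring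
      _ = (K / L) * dist g h := by rw [← Real.exp_add]; simp
      _ ≤ _ := by gcongr
  have hCW : ContractingWith (1 / 2 : NNReal) (hmaps.restrict Φ S S) := by
    refine ⟨by rw [← NNReal.coe_lt_coe]; norm_num, LipschitzWith.of_dist_le_mul fun g h => ?_⟩
    have h2 : ((1 / 2 : NNReal) : ℝ) = 1 / 2 := by simp
    rw [h2]
    exact hcontr g g.2 h h.2
  have h0S : (0 : C(Set.Icc (0 : ℝ) T, κ → ℝ)) ∈ S := by
    intro t
    simp only [ContinuousMap.zero_apply, norm_zero]
    positivity
  obtain ⟨g, _, hg, -⟩ := hCW.exists_fixedPoint' hSclosed.isComplete hmaps h0S (edist_ne_top _ _)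
  refine ⟨ext g, hext g, fun t ht i => ?_⟩
  have h1 : ext g t i = Real.exp (L * t) * (Φ g) ⟨t, ht⟩ i := by
    rw [hg.eq]
    simp [ext, Set.projIcc_of_mem hT ht]
  rw [h1]
  change Real.exp (L * t) * (Real.exp (-(L * t)) * _) = _
  rw [← mul_assoc, ← Real.exp_add]
  simp

lemma CaraRHS.exists_lipschitz (hF : CaraRHS F A B) {T : ℝ} {x₀ : κ → ℝ} {γ : ℝ → κ → ℝ}
    (hγc : Continuous γ) (hγ : IntSol F x₀ T γ) :
    ∃ K : ℝ, ∀ s ∈ Set.Icc 0 T, ∀ t ∈ Set.Icc 0 T, ∀ i, |γ s i - γ t i| ≤ K * |s - t| := by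
  obtain ⟨R, hR⟩ := isCompact_Icc.exists_bound_of_continuousOn (s := Set.Icc 0 T)
    hγc.continuousOn
  refine ⟨A + B * R, fun s hs t ht i => ?_⟩
  have hI := fun a b => hF.intervalIntegrable_of_continuous hγc a b i
  rw [hγ s hs i, hγ t ht i, add_sub_add_left_eq_sub,
    intervalIntegral.integral_interval_sub_left (hI _ _) (hI _ _), ← Real.norm_eq_abs]
  refine intervalIntegral.norm_integral_le_of_norm_le_const fun r hr => ?_
  have hr' : r ∈ Set.Icc 0 T :=
    Set.OrdConnected.uIcc_subset inferInstance ht hs (Set.uIoc_subset_uIcc hr)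
  have := hF.one_le_B
  calc ‖F r (γ r) i‖ ≤ ‖F r (γ r)‖ := norm_le_pi_norm _ i
    _ ≤ A + B * ‖γ r‖ := hF.growth _ _
    _ ≤ _ := by gcongr; exact hR r hr'

end Caratheodory

/-! ### The acceleration field -/

lemma enorm2_le (a b : ℝ) : enorm2 a b ≤ |a| + |b| := by
  unfold enorm2
  refine Real.sqrt_le_iff.2 ⟨by positivity, ?_⟩
  nlinarith [sq_abs a, sq_abs b, abs_nonneg a, abs_nonneg b,
    mul_nonneg (abs_nonneg a) (abs_nonneg b)]

/-- An average of numbers bounded by `D` is bounded by `D`; the empty average is `0`. -/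
lemma abs_avg_le {ι : Type*} (s : Finset ι) (f : ι → ℝ) {D : ℝ} (hD : 0 ≤ D)
    (h : ∀ i, |f i| ≤ D) : |(s.card : ℝ)⁻¹ * ∑ i ∈ s, f i| ≤ D := by
  rcases s.eq_empty_or_nonempty with rfl | hs
  · simpa using hD
  have hc : (0 : ℝ) < s.card := by exact_mod_cast hs.card_pos
  rw [abs_mul, abs_of_pos (inv_pos.2 hc), inv_mul_le_iff₀ hc]
  calc |∑ i ∈ s, f i| ≤ ∑ i ∈ s, |f i| := Finset.abs_sum_le_sum_abs _ _
    _ ≤ ∑ _i ∈ s, D := Finset.sum_le_sum fun i _ => h i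
    _ = s.card * D := by simp

section Acceleration

variable {H₁ H₂ : ℝ → ℝ → ℝ} {M N : ℕ}

lemma abs_hybAcc_le (lane : Veh M N → ℤ) (p v : Veh M N → ℝ) (j : ℤ) (a b : ℝ) {D : ℝ}
    (hD : 0 ≤ D) (h : ∀ n, |H₁ (a - p n) b + H₂ (a - p n) (b - v n)| ≤ D) :
    |hybAcc H₁ H₂ lane p v j a b| ≤ 2 * D := by
  unfold hybAcc
  refine (abs_add_le _ _).trans ?_
  rw [two_mul]
  exact add_le_add (abs_avg_le _ _ hD fun i => h _) (abs_avg_le _ _ hD fun i => h _)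

lemma abs_hybAcc_sub_le (lane : Veh M N → ℤ) (p v p' v' : Veh M N → ℝ) (j : ℤ)
    (a b a' b' : ℝ) {D : ℝ} (hD : 0 ≤ D)
    (h : ∀ n, |(H₁ (a - p n) b + H₂ (a - p n) (b - v n)) -
      (H₁ (a' - p' n) b' + H₂ (a' - p' n) (b' - v' n))| ≤ D) :
    |hybAcc H₁ H₂ lane p v j a b - hybAcc H₁ H₂ lane p' v' j a' b'| ≤ 2 * D := by
  unfold hybAcc
  rw [add_sub_add_comm, ← mul_sub, ← mul_sub, ← Finset.sum_sub_distrib,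
    ← Finset.sum_sub_distrib, two_mul]
  exact (abs_add_le _ _).trans
    (add_le_add (abs_avg_le _ _ hD fun i => h _) (abs_avg_le _ _ hD fun i => h _))

lemma exists_lip_on_box {H : ℝ → ℝ → ℝ} (hH : LocallyLipschitz (Function.uncurry H)) (R : ℝ) :
    ∃ K : ℝ, 0 ≤ K ∧ ∀ a b a' b' D : ℝ, |a| ≤ R → |b| ≤ R → |a'| ≤ R → |b'| ≤ R →
      |a - a'| ≤ D → |b - b'| ≤ D → |H a b - H a' b'| ≤ K * D := by
  obtain ⟨K, hK⟩ := LocallyLipschitzOn.exists_lipschitzOnWith_of_compact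
    (isCompact_closedBall (0 : ℝ × ℝ) R) (hH.locallyLipschitzOn (s := closedBall 0 R))
  refine ⟨K, K.2, fun a b a' b' D ha hb ha' hb' h1 h2 => ?_⟩
  have hmem : ∀ a b : ℝ, |a| ≤ R → |b| ≤ R → (a, b) ∈ closedBall (0 : ℝ × ℝ) R := by
    intro a b ha hb
    rw [mem_closedBall_zero_iff]
    exact max_le ha hb
  have := hK.dist_le_mul (a, b) (hmem a b ha hb) (a', b') (hmem a' b' ha' hb')
  refine (this.trans ?_ : dist (H a b) (H a' b') ≤ _)
  gcongr
  exact max_le h1 h2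

/-- The right-hand side of the coupled system on the state space `(pos, vel)`, with index type
`Veh M N ⊕ Veh M N` (positions first), for prescribed controls `c` and lanes. -/
def hybRHS (H₁ H₂ : ℝ → ℝ → ℝ) (c : Veh M N → ℝ → ℝ) (lane : Veh M N → ℝ → ℤ)
    (s : ℝ) (x : Veh M N ⊕ Veh M N → ℝ) : Veh M N ⊕ Veh M N → ℝ :=
  Sum.elim (fun n => x (Sum.inr n)) fun n =>
    hybAcc H₁ H₂ (fun n' => lane n' s) (fun n' => x (Sum.inl n')) (fun n' => x (Sum.inr n'))
      (lane n s) (x (Sum.inl n)) (x (Sum.inr n)) + c n s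

lemma continuous_hybAcc (hH₁ : Continuous (Function.uncurry H₁))
    (hH₂ : Continuous (Function.uncurry H₂)) (ℓ : Veh M N → ℤ) (j : ℤ) (n : Veh M N) :
    Continuous fun x : Veh M N ⊕ Veh M N → ℝ =>
      hybAcc H₁ H₂ ℓ (fun n' => x (Sum.inl n')) (fun n' => x (Sum.inr n')) j
        (x (Sum.inl n)) (x (Sum.inr n)) := by
  have h1 : ∀ f g : (Veh M N ⊕ Veh M N → ℝ) → ℝ, Continuous f → Continuous g →
      Continuous fun x => H₁ (f x) (g x) := fun f g hf hg => hH₁.comp (hf.prodMk hg)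
  have h2 : ∀ f g : (Veh M N ⊕ Veh M N → ℝ) → ℝ, Continuous f → Continuous g →
      Continuous fun x => H₂ (f x) (g x) := fun f g hf hg => hH₂.comp (hf.prodMk hg)
  have h3 : ∀ n l : Veh M N, Continuous fun x : Veh M N ⊕ Veh M N → ℝ =>
      H₁ (x (Sum.inl n) - x (Sum.inl l)) (x (Sum.inr n)) +
        H₂ (x (Sum.inl n) - x (Sum.inl l)) (x (Sum.inr n) - x (Sum.inr l)) := fun n l =>
    (h1 _ _ (by fun_prop) (by fun_prop)).add (h2 _ _ (by fun_prop) (by fun_prop))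
  unfold hybAcc
  fun_prop

/-- Lane data range over a countable set, so joint measurability reduces to continuity in the
state for frozen lanes. -/
lemma measurable_hybRHS (hH₁ : Continuous (Function.uncurry H₁))
    (hH₂ : Continuous (Function.uncurry H₂)) {c : Veh M N → ℝ → ℝ} (hc : ∀ n, Measurable (c n))
    {lane : Veh M N → ℝ → ℤ} (hl : ∀ n, Measurable (lane n)) :
    Measurable fun p : ℝ × (Veh M N ⊕ Veh M N → ℝ) => hybRHS H₁ H₂ c lane p.1 p.2 := by
  refine measurable_pi_iff.2 fun i => ?_
  rcases i with n | n
  · exact (measurable_pi_apply (Sum.inr n)).comp measurable_snd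
  let G : (Veh M N → ℤ) × (Veh M N ⊕ Veh M N → ℝ) → ℝ := fun q =>
    hybAcc H₁ H₂ q.1 (fun n' => q.2 (Sum.inl n')) (fun n' => q.2 (Sum.inr n'))
      (q.1 n) (q.2 (Sum.inl n)) (q.2 (Sum.inr n))
  have hG : Measurable G := measurable_from_prod_countable_right fun ℓ =>
    (continuous_hybAcc hH₁ hH₂ ℓ (ℓ n) n).measurable
  have hlane : Measurable fun p : ℝ × (Veh M N ⊕ Veh M N → ℝ) =>
      ((fun n' => lane n' p.1 : Veh M N → ℤ), p.2) :=
    (measurable_pi_iff.2 fun n' => (hl n').comp measurable_fst).prodMk measurable_snd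
  exact (hG.comp hlane).add ((hc n).comp measurable_fst)

lemma caraRHS_hybRHS {C U : ℝ} (hC : 0 < C)
    (hH₁lip : LocallyLipschitz (Function.uncurry H₁))
    (hH₂lip : LocallyLipschitz (Function.uncurry H₂))
    (hH₁g : ∀ a b, |H₁ a b| ≤ C * (1 + enorm2 a b))
    (hH₂g : ∀ a b, |H₂ a b| ≤ C * (1 + enorm2 a b))
    {c : Veh M N → ℝ → ℝ} (hc : ∀ n, Measurable (c n)) (hU : 0 ≤ U) (hcU : ∀ n t, |c n t| ≤ U)
    {lane : Veh M N → ℝ → ℤ} (hl : ∀ n, Measurable (lane n)) :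
    CaraRHS (hybRHS H₁ H₂ c lane) (4 * C + U) (14 * C + 1) where
  meas := measurable_hybRHS hH₁lip.continuous hH₂lip.continuous hc hl
  A_nonneg := by positivity
  one_le_B := by linarith
  growth := by
    intro t x
    have hx : ∀ i, |x i| ≤ ‖x‖ := fun i => norm_le_pi_norm x i
    have hx0 := norm_nonneg x
    refine (pi_norm_le_iff_of_nonneg (by positivity)).2 fun i => ?_
    rcases i with n | n
    · refine (hx (Sum.inr n)).trans ?_
      nlinarith [mul_nonneg hC.le hx0]
    · refine (abs_add_le _ _).trans ?_
      have hb : |hybAcc H₁ H₂ (fun n' => lane n' t) (fun n' => x (Sum.inl n'))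
          (fun n' => x (Sum.inr n')) (lane n t) (x (Sum.inl n)) (x (Sum.inr n))| ≤
          2 * (C * (1 + 3 * ‖x‖) + C * (1 + 4 * ‖x‖)) := by
        refine abs_hybAcc_le _ _ _ _ _ _ (by positivity) fun l => ?_
        have h1 := abs_sub (x (Sum.inl n)) (x (Sum.inl l))
        have h2 := abs_sub (x (Sum.inr n)) (x (Sum.inr l))
        have h3 := hx (Sum.inl n)
        have h4 := hx (Sum.inl l)
        have h5 := hx (Sum.inr n)
        have h6 := hx (Sum.inr l)
        refine (abs_add_le _ _).trans (add_le_add ((hH₁g _ _).trans ?_) ((hH₂g _ _).trans ?_))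
        · have := enorm2_le (x (Sum.inl n) - x (Sum.inl l)) (x (Sum.inr n))
          gcongr; linarith
        · have := enorm2_le (x (Sum.inl n) - x (Sum.inl l)) (x (Sum.inr n) - x (Sum.inr l))
          gcongr; linarith
      have := hcU n t
      nlinarith
  lip := by
    intro R
    obtain ⟨K₁, hK₁, h₁⟩ := exists_lip_on_box hH₁lip (2 * R)
    obtain ⟨K₂, hK₂, h₂⟩ := exists_lip_on_box hH₂lip (2 * R)
    refine ⟨4 * (K₁ + K₂) + 1, by positivity, fun t x y hx hy => ?_⟩
    have hxi : ∀ i, |x i| ≤ R := fun i => (norm_le_pi_norm x i).trans hx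
    have hyi : ∀ i, |y i| ≤ R := fun i => (norm_le_pi_norm y i).trans hy
    have hd : ∀ i, |x i - y i| ≤ ‖x - y‖ := fun i => norm_le_pi_norm (x - y) i
    have hd0 := norm_nonneg (x - y)
    have hR : 0 ≤ R := (norm_nonneg _).trans hx
    refine (pi_norm_le_iff_of_nonneg (by positivity)).2 fun i => ?_
    rcases i with n | n
    · refine (hd (Sum.inr n)).trans ?_
      nlinarith [mul_nonneg (add_nonneg hK₁ hK₂) hd0]
    · have hrw : (hybRHS H₁ H₂ c lane t x - hybRHS H₁ H₂ c lane t y) (Sum.inr n) =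
          hybAcc H₁ H₂ (fun n' => lane n' t) (fun n' => x (Sum.inl n'))
            (fun n' => x (Sum.inr n')) (lane n t) (x (Sum.inl n)) (x (Sum.inr n)) -
          hybAcc H₁ H₂ (fun n' => lane n' t) (fun n' => y (Sum.inl n'))
            (fun n' => y (Sum.inr n')) (lane n t) (y (Sum.inl n)) (y (Sum.inr n)) := by
        simp [hybRHS]
      rw [hrw, Real.norm_eq_abs]
      have hdiff : ∀ i k, |x i - x k - (y i - y k)| ≤ 2 * ‖x - y‖ := by
        intro i k
        rw [sub_sub_sub_comm]
        linarith [abs_sub (x i - y i) (x k - y k), hd i, hd k]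
      have hbox : ∀ z : Veh M N ⊕ Veh M N → ℝ, (∀ i, |z i| ≤ R) → ∀ i k,
          |z i - z k| ≤ 2 * R := by
        intro z hz i k
        linarith [abs_sub (z i) (z k), hz i, hz k]
      have hb : |hybAcc H₁ H₂ (fun n' => lane n' t) (fun n' => x (Sum.inl n'))
            (fun n' => x (Sum.inr n')) (lane n t) (x (Sum.inl n)) (x (Sum.inr n)) -
          hybAcc H₁ H₂ (fun n' => lane n' t) (fun n' => y (Sum.inl n'))
            (fun n' => y (Sum.inr n')) (lane n t) (y (Sum.inl n)) (y (Sum.inr n))| ≤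
          2 * (K₁ * (2 * ‖x - y‖) + K₂ * (2 * ‖x - y‖)) := by
        refine abs_hybAcc_sub_le _ _ _ _ _ _ _ _ _ _ (by positivity) fun l => ?_
        rw [add_sub_add_comm]
        refine (abs_add_le _ _).trans (add_le_add ?_ ?_)
        · refine h₁ _ _ _ _ _ (hbox x hxi _ _) ?_ (hbox y hyi _ _) ?_ (hdiff _ _) ?_
          · linarith [hxi (Sum.inr n)]
          · linarith [hyi (Sum.inr n)]
          · linarith [hd (Sum.inr n)]
        · exact h₂ _ _ _ _ _ (hbox x hxi _ _) (hbox x hxi _ _) (hbox y hyi _ _)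
            (hbox y hyi _ _) (hdiff _ _) (hdiff _ _)
      refine hb.trans ?_
      nlinarith

end Acceleration

/-! ### The lane-changing rule -/

section Rule

variable {M N : ℕ}

/-- The choice among `jold + 1`, `jold - 1` and `jold`, for a predicate `ok` singling out the
admissible lanes and expected accelerations `abar`, with ties broken towards `jold + 1`. -/
def PickLane (ok : ℤ → Prop) (abar : ℤ → ℝ) (jold res : ℤ) : Prop :=
  ((ok (jold + 1) ∧ (¬ ok (jold - 1) ∨ abar (jold - 1) ≤ abar (jold + 1))) →
      res = jold + 1) ∧
  ((¬ (ok (jold + 1) ∧ (¬ ok (jold - 1) ∨ abar (jold - 1) ≤ abar (jold + 1))) ∧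
      ok (jold - 1)) → res = jold - 1) ∧
  ((¬ ok (jold + 1) ∧ ¬ ok (jold - 1)) → res = jold)

/-- The lane-changing rule for a single vehicle `n` on lane `jold`, when the lanes, positions,
velocities and controls of all vehicles are `L`, `p`, `v`, `c`: the new lane is `res`. The
entry `L n` is irrelevant. -/
def LaneRule (H₁ H₂ : ℝ → ℝ → ℝ) (m : ℕ) (Δ : ℝ) (c : Veh M N → ℝ) (n : Veh M N) (jold : ℤ)
    (L : Veh M N → ℤ) (p v : Veh M N → ℝ) (res : ℤ) : Prop :=
  let laneOld : Veh M N → ℤ := Function.update L n jold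
  let laneNew : ℤ → Veh M N → ℤ := fun j' => Function.update L n j'
  let acur : ℝ := hybAcc H₁ H₂ laneOld p v jold (p n) (v n) + c n
  let abar : ℤ → ℝ := fun j' => hybAcc H₁ H₂ laneOld p v j' (p n) (v n) + c n
  let follower : ℤ → Veh M N → Prop := fun j' l =>
    l ≠ n ∧ L l = j' ∧ p l < p n ∧
      ∀ l', l' ≠ n → L l' = j' → p l' < p n → p l' ≤ p l
  let abarFol : ℤ → Veh M N → ℝ := fun j' l =>
    hybAcc H₁ H₂ (laneNew j') p v j' (p l) (v l) + c l
  let ok : ℤ → Prop := fun j' =>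
    1 ≤ j' ∧ j' ≤ (m : ℤ) ∧ -Δ ≤ abar j' ∧
      (∀ l, follower j' l → -Δ ≤ abarFol j' l) ∧ acur + Δ ≤ abar j'
  PickLane ok abar jold res

variable {H₁ H₂ : ℝ → ℝ → ℝ} {m : ℕ} {Δ : ℝ} {c : Veh M N → ℝ} {n : Veh M N} {jold : ℤ}
  {L L' : Veh M N → ℤ} {p v : Veh M N → ℝ} {res res' : ℤ}

lemma LaneRule.exists_pick : ∃ (ok : ℤ → Prop) (abar : ℤ → ℝ),
    (∀ res, LaneRule H₁ H₂ m Δ c n jold L p v res ↔ PickLane ok abar jold res) ∧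
    ∀ j, ok j → 1 ≤ j ∧ j ≤ (m : ℤ) := by
  dsimp only [LaneRule]
  exact ⟨_, _, fun _ => Iff.rfl, fun _ h => ⟨h.1, h.2.1⟩⟩

lemma LaneRule.exists_res (hj : 1 ≤ jold ∧ jold ≤ (m : ℤ)) :
    ∃ res : ℤ, (1 ≤ res ∧ res ≤ (m : ℤ)) ∧ LaneRule H₁ H₂ m Δ c n jold L p v res := by
  obtain ⟨ok, abar, hpick, hok⟩ := LaneRule.exists_pick (H₁ := H₁) (H₂ := H₂) (m := m) (Δ := Δ)
    (c := c) (n := n) (jold := jold) (L := L) (p := p) (v := v)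
  simp only [hpick]
  by_cases h1 : ok (jold + 1) ∧ (¬ ok (jold - 1) ∨ abar (jold - 1) ≤ abar (jold + 1))
  · exact ⟨jold + 1, hok _ h1.1, fun _ => rfl, fun h => absurd h1 h.1, fun h => absurd h1.1 h.1⟩
  by_cases h2 : ok (jold - 1)
  · exact ⟨jold - 1, hok _ h2, fun h => absurd h h1, fun _ => rfl, fun h => absurd h2 h.2⟩
  · exact ⟨jold, hj, fun h => absurd h h1, fun h => absurd h.2 h2, fun _ => rfl⟩

lemma LaneRule.unique (h : LaneRule H₁ H₂ m Δ c n jold L p v res)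
    (h' : LaneRule H₁ H₂ m Δ c n jold L p v res') : res = res' := by
  obtain ⟨ok, abar, hpick, -⟩ := LaneRule.exists_pick (H₁ := H₁) (H₂ := H₂) (m := m) (Δ := Δ)
    (c := c) (n := n) (jold := jold) (L := L) (p := p) (v := v)
  rw [hpick] at h h'
  by_cases h1 : ok (jold + 1) ∧ (¬ ok (jold - 1) ∨ abar (jold - 1) ≤ abar (jold + 1))
  · exact (h.1 h1).trans (h'.1 h1).symm
  by_cases h2 : ok (jold - 1)
  · exact (h.2.1 ⟨h1, h2⟩).trans (h'.2.1 ⟨h1, h2⟩).symm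
  · have h3 : ¬ ok (jold + 1) := fun h3 => h1 ⟨h3, Or.inl h2⟩
    exact (h.2.2 ⟨h3, h2⟩).trans (h'.2.2 ⟨h3, h2⟩).symm

lemma LaneRule.congr (hL : ∀ l, l ≠ n → L' l = L l)
    (h : LaneRule H₁ H₂ m Δ c n jold L p v res) : LaneRule H₁ H₂ m Δ c n jold L' p v res := by
  have hup : ∀ j, Function.update L' n j = Function.update L n j := by
    intro j
    ext l
    by_cases hl : l = n
    · subst hl; simp
    · simp [hl, hL l hl]
  have hfol : ∀ j' l, (l ≠ n ∧ L' l = j' ∧ p l < p n ∧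
      ∀ l', l' ≠ n → L' l' = j' → p l' < p n → p l' ≤ p l) ↔
      (l ≠ n ∧ L l = j' ∧ p l < p n ∧
        ∀ l', l' ≠ n → L l' = j' → p l' < p n → p l' ≤ p l) := by
    intro j' l
    refine and_congr_right fun hl => ?_
    rw [hL l hl]
    refine and_congr_right fun _ => and_congr_right fun _ => ?_
    exact forall_congr' fun l' => forall_congr' fun hl' => by rw [hL l' hl']
  unfold LaneRule at h ⊢
  simp only [hup, hfol]
  exact h

end Rule

/-! ### Timer events -/

section Hybrid

variable {M N : ℕ} {m : ℕ} {T T₁ : ℝ} {τ₀ : Veh M N → ℝ} {ι₀ : Veh M N → ℤ}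
  {lane lane' : Veh M N → ℝ → ℤ}

/-- The conditions on the lane indices that do not involve the states. -/
structure LaneOK (m : ℕ) (T₁ : ℝ) (τ₀ : Veh M N → ℝ) (ι₀ : Veh M N → ℤ)
    (lane : Veh M N → ℝ → ℤ) : Prop where
  init : ∀ n, lane n 0 = ι₀ n
  mem : ∀ n t, 1 ≤ lane n t ∧ lane n t ≤ (m : ℤ)
  const : ∀ n, ∀ s t : ℝ, ⌊(s + τ₀ n) / T₁⌋ = ⌊(t + τ₀ n) / T₁⌋ → lane n s = lane n t

lemma floor_event (hT₁ : 0 < T₁) (τ : ℝ) (q : ℤ) : ⌊(q * T₁ - τ + τ) / T₁⌋ = q := by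
  rw [sub_add_cancel, mul_div_cancel_right₀ _ hT₁.ne', Int.floor_intCast]

lemma LaneOK.measurable (h : LaneOK m T₁ τ₀ ι₀ lane) (hT₁ : 0 < T₁) (n : Veh M N) :
    Measurable (lane n) := by
  have hfac : lane n = (fun q : ℤ => lane n (q * T₁ - τ₀ n)) ∘
      fun t : ℝ => ⌊(t + τ₀ n) / T₁⌋ := by
    ext t
    exact h.const n _ _ (floor_event hT₁ _ _).symm
  rw [hfac]
  exact Measurable.of_discrete.comp
    (Int.measurable_floor.comp ((measurable_id.add_const _).div_const _))

/-- Distinct initial timers exclude simultaneous events. -/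
lemma event_inj (hτ₀ : ∀ n, τ₀ n ∈ Set.Ico 0 T₁)
    (hinj : Function.Injective τ₀) {t : ℝ} {n l : Veh M N} {q q' : ℤ}
    (hn : t + τ₀ n = q * T₁) (hl : t + τ₀ l = q' * T₁) : n = l := by
  have hT₁ : 0 < T₁ := (hτ₀ n).1.trans_lt (hτ₀ n).2
  have h1 := hτ₀ n
  have h2 := hτ₀ l
  have h3 : q < q' + 1 := by
    have : (q : ℝ) < q' + 1 := lt_of_mul_lt_mul_right (by linarith [h1.2, h2.1]) hT₁.le
    exact_mod_cast this
  have h4 : q' < q + 1 := by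
    have : (q' : ℝ) < q + 1 := lt_of_mul_lt_mul_right (by linarith [h1.1, h2.2]) hT₁.le
    exact_mod_cast this
  have h5 : q = q' := by omega
  subst h5
  exact hinj (by linarith)

lemma finite_events (hT₁ : 0 < T₁) (hτ₀ : ∀ n, τ₀ n ∈ Set.Ico 0 T₁) :
    {t : ℝ | t ∈ Set.Ioc 0 T ∧ ∃ n, ∃ q : ℤ, t + τ₀ n = q * T₁}.Finite := by
  refine (Set.Finite.image (fun a : Veh M N × ℤ => a.2 * T₁ - τ₀ a.1)
    (Set.finite_univ.prod (Set.finite_Icc (0 : ℤ) ⌈(T + T₁) / T₁⌉))).subset ?_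
  rintro t ⟨ht, n, q, hq⟩
  refine ⟨(n, q), ⟨Set.mem_univ _, ?_, ?_⟩, by simp only; linarith⟩
  · have h1 : (0 : ℝ) < q := by
      refine lt_of_mul_lt_mul_right ?_ hT₁.le
      linarith [(hτ₀ n).1, ht.1]
    exact_mod_cast h1.le
  · have h1 : (q : ℝ) ≤ (T + T₁) / T₁ := by
      rw [le_div_iff₀ hT₁]
      linarith [(hτ₀ n).2, ht.2]
    exact_mod_cast h1.trans (Int.le_ceil _)

/-- Two lane assignments can only start to differ at a timer event. -/
lemma LaneOK.exists_event_of_ne (h : LaneOK m T₁ τ₀ ι₀ lane) (h' : LaneOK m T₁ τ₀ ι₀ lane')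
    (hT₁ : 0 < T₁) (hτ₀ : ∀ n, τ₀ n ∈ Set.Ico 0 T₁) {n : Veh M N} {r : ℝ} (hr : 0 ≤ r)
    (hne : lane' n r ≠ lane n r) :
    ∃ e, 0 < e ∧ e ≤ r ∧ (∃ q : ℤ, e + τ₀ n = q * T₁) ∧ lane' n e ≠ lane n e := by
  set q := ⌊(r + τ₀ n) / T₁⌋ with hq
  have hτ := hτ₀ n
  have hq0 : 0 ≤ q := Int.floor_nonneg.2 (div_nonneg (by linarith [hτ.1]) hT₁.le)
  have hq1 : q ≠ 0 := by
    intro h0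
    refine hne ?_
    have h1 : ⌊(r + τ₀ n) / T₁⌋ = ⌊(0 + τ₀ n) / T₁⌋ := by
      rw [← hq, h0, eq_comm, Int.floor_eq_zero_iff, zero_add]
      exact ⟨div_nonneg hτ.1 hT₁.le, (div_lt_one hT₁).2 hτ.2⟩
    rw [h.const n _ _ h1, h'.const n _ _ h1, h.init, h'.init]
  have hfl : ⌊(r + τ₀ n) / T₁⌋ = ⌊(q * T₁ - τ₀ n + τ₀ n) / T₁⌋ := by
    rw [floor_event hT₁]
  refine ⟨q * T₁ - τ₀ n, ?_, ?_, ⟨q, by ring⟩, ?_⟩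
  · have h1 : (1 : ℝ) ≤ q := by exact_mod_cast (show (1 : ℤ) ≤ q by omega)
    nlinarith [hτ.2]
  · have h1 : (q : ℝ) ≤ (r + τ₀ n) / T₁ := Int.floor_le _
    rw [le_div_iff₀ hT₁] at h1
    linarith
  · rwa [← h.const n _ _ hfl, ← h'.const n _ _ hfl]

/-! ### Existence and uniqueness of the hybrid trajectory -/

variable {H₁ H₂ : ℝ → ℝ → ℝ} {Δ A B : ℝ} {c : Veh M N → ℝ → ℝ} {x₀ : Veh M N ⊕ Veh M N → ℝ}

/-- Causality: states up to time `a` only depend on lanes before `a`. -/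
lemma states_eq_of_lanes_eq (hF : CaraRHS (hybRHS H₁ H₂ c lane) A B) {a : ℝ} (haT : a ≤ T)
    {η η' : ℝ → Veh M N ⊕ Veh M N → ℝ}
    (hη : IntSol (hybRHS H₁ H₂ c lane) x₀ T η) (hη' : IntSol (hybRHS H₁ H₂ c lane') x₀ T η')
    (heq : ∀ n, ∀ r ∈ Set.Ico 0 a, lane' n r = lane n r) :
    ∀ t ∈ Set.Icc 0 a, η' t = η t := by
  intro t ht
  obtain ⟨γ, hγc, hγ⟩ := hF.exists_sol (ht.1.trans ht.2) x₀
  have h1 : IntSol (hybRHS H₁ H₂ c lane) x₀ a η := fun s hs => hη s ⟨hs.1, hs.2.trans haT⟩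
  have h2 : IntSol (hybRHS H₁ H₂ c lane) x₀ a η' := by
    intro s hs i
    rw [hη' s ⟨hs.1, hs.2.trans haT⟩ i]
    congr 1
    refine intervalIntegral.integral_congr_Ioo_of_le hs.1 fun r hr => ?_
    have h3 : ∀ n, lane' n r = lane n r := fun n => heq n r ⟨hr.1.le, hr.2.trans_le hs.2⟩
    simp only [hybRHS, h3]
  rw [hF.unique hγc hγ h1 t ht, hF.unique hγc hγ h2 t ht]

/-- The rule holds for vehicle `n` at time `t` along the trajectory `(lane, γ)`. -/
def RuleAt (H₁ H₂ : ℝ → ℝ → ℝ) (m : ℕ) (T₁ Δ : ℝ) (c : Veh M N → ℝ → ℝ)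
    (lane : Veh M N → ℝ → ℤ) (γ : ℝ → Veh M N ⊕ Veh M N → ℝ) (n : Veh M N) (t : ℝ) : Prop :=
  LaneRule H₁ H₂ m Δ (fun n' => c n' t) n (lane n (max 0 (t - T₁ / 2))) (fun n' => lane n' t)
    (fun n' => γ t (Sum.inl n')) (fun n' => γ t (Sum.inr n')) (lane n t)

/-- Existence when the rule is enforced only at the events in a finite set `s`, by
induction on `s` through its largest element `a`: after `a`, the lane of the vehicle active at `a`
is overwritten by the outcome of the rule. By causality this leaves everything before `a` intact. -/
lemma exists_traj_of_finset (hτ₀ : ∀ n, τ₀ n ∈ Set.Ico 0 T₁)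
    (hinj : Function.Injective τ₀) (hι₀ : ∀ n, 1 ≤ ι₀ n ∧ ι₀ n ≤ (m : ℤ)) (hT : 0 ≤ T)
    (hT₁ : 0 < T₁)
    (hF : ∀ lane : Veh M N → ℝ → ℤ, (∀ n, Measurable (lane n)) →
      CaraRHS (hybRHS H₁ H₂ c lane) A B) (s : Finset ℝ) :
    (∀ a ∈ s, a ∈ Set.Ioc 0 T ∧ ∃ n, ∃ q : ℤ, a + τ₀ n = q * T₁) →
    ∃ lane, LaneOK m T₁ τ₀ ι₀ lane ∧ ∃ γ, Continuous γ ∧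
      IntSol (hybRHS H₁ H₂ c lane) x₀ T γ ∧
      ∀ n, ∀ t ∈ s, (∃ q : ℤ, t + τ₀ n = q * T₁) → RuleAt H₁ H₂ m T₁ Δ c lane γ n t := by
  classical
  induction s using Finset.induction_on_max with
  | empty =>
    intro _
    have hl : LaneOK m T₁ τ₀ ι₀ (fun n _ => ι₀ n) :=
      ⟨fun _ => rfl, fun n _ => hι₀ n, fun _ _ _ _ => rfl⟩
    obtain ⟨γ, hγc, hγ⟩ := (hF _ (hl.measurable hT₁)).exists_sol hT x₀
    exact ⟨_, hl, γ, hγc, hγ, by simp⟩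
  | insert a s hmax ih =>
    intro hs
    obtain ⟨lane, hl, γ, hγc, hγ, hrule⟩ := ih fun a ha => hs a (Finset.mem_insert_of_mem ha)
    obtain ⟨haT, n₀, q₀, hq₀⟩ := hs a (Finset.mem_insert_self _ _)
    obtain ⟨res, hres, hR⟩ := LaneRule.exists_res (H₁ := H₁) (H₂ := H₂) (Δ := Δ)
      (c := fun n' => c n' a) (n := n₀) (L := fun n' => lane n' a)
      (p := fun n' => γ a (Sum.inl n')) (v := fun n' => γ a (Sum.inr n'))
      (hl.mem n₀ (max 0 (a - T₁ / 2)))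
    let lane' : Veh M N → ℝ → ℤ := fun n t => if n = n₀ ∧ a ≤ t then res else lane n t
    have hlt : ∀ n t, t < a → lane' n t = lane n t := fun n t h => by
      simp [lane', not_le.2 h]
    have hother : ∀ n t, n ≠ n₀ → lane' n t = lane n t := fun n t h => by simp [lane', h]
    have hfl : ∀ t, a ≤ t ↔ q₀ ≤ ⌊(t + τ₀ n₀) / T₁⌋ := by
      intro t
      rw [Int.le_floor, le_div_iff₀ hT₁, ← hq₀, add_le_add_iff_right]
    have hl' : LaneOK m T₁ τ₀ ι₀ lane' := by
      refine ⟨fun n => (hlt n 0 haT.1).trans (hl.init n), fun n t => ?_, fun n r t hrt => ?_⟩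
      · simp only [lane']
        split_ifs
        exacts [hres, hl.mem n t]
      · by_cases hn : n = n₀
        · subst hn
          simp only [lane', true_and, hfl, hrt, hl.const n r t hrt]
        · rw [hother n r hn, hother n t hn, hl.const n r t hrt]
    have hF' := hF _ (hl'.measurable hT₁)
    obtain ⟨γ', hγc', hγ'⟩ := hF'.exists_sol hT x₀
    have heq := states_eq_of_lanes_eq (hF _ (hl.measurable hT₁)) haT.2 hγ hγ'
      fun n r hr => hlt n r hr.2
    refine ⟨lane', hl', γ', hγc', hγ', fun n t ht hq => ?_⟩
    rcases Finset.mem_insert.1 ht with rfl | hts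
    · obtain ⟨q, hq⟩ := hq
      obtain rfl := event_inj hτ₀ hinj hq hq₀
      have h1 : lane' n t = res := by simp [lane']
      unfold RuleAt
      rw [h1, heq t ⟨haT.1.le, le_rfl⟩, hlt n _ (max_lt haT.1 (by linarith))]
      exact hR.congr fun l hne => hother l t hne
    · have hta := hmax t hts
      have ht0 : 0 < t := (hs t ht).1.1
      have h1 := hrule n t hts hq
      unfold RuleAt at h1 ⊢
      have h2 : (fun n' => lane' n' t) = fun n' => lane n' t := funext fun n' => hlt n' t hta
      rw [h2, hlt n t hta, hlt n _ (max_lt (ht0.trans hta) (by linarith)),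
        heq t ⟨ht0.le, hta.le⟩]
      exact h1

/-- At the earliest event where the lanes of two trajectories would differ, the lanes of the
other vehicles and, by causality, all states still agree, so the rule gives the same outcome. -/
lemma lanes_unique (hτ₀ : ∀ n, τ₀ n ∈ Set.Ico 0 T₁)
    (hinj : Function.Injective τ₀) (hT₁ : 0 < T₁)
    (hl : LaneOK m T₁ τ₀ ι₀ lane) (hl' : LaneOK m T₁ τ₀ ι₀ lane')
    (hF : CaraRHS (hybRHS H₁ H₂ c lane) A B)
    {η η' : ℝ → Veh M N ⊕ Veh M N → ℝ}
    (hη : IntSol (hybRHS H₁ H₂ c lane) x₀ T η) (hη' : IntSol (hybRHS H₁ H₂ c lane') x₀ T η')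
    (hr : ∀ n, ∀ t ∈ Set.Ioc 0 T, (∃ q : ℤ, t + τ₀ n = q * T₁) →
      RuleAt H₁ H₂ m T₁ Δ c lane η n t)
    (hr' : ∀ n, ∀ t ∈ Set.Ioc 0 T, (∃ q : ℤ, t + τ₀ n = q * T₁) →
      RuleAt H₁ H₂ m T₁ Δ c lane' η' n t) :
    ∀ n, ∀ t ∈ Set.Icc 0 T, lane' n t = lane n t := by
  by_contra! hcon
  obtain ⟨n₁, t₁, ht₁, hne₁⟩ := hcon
  let D : Set ℝ := {t | t ∈ Set.Ioc 0 T ∧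
    ∃ n, (∃ q : ℤ, t + τ₀ n = q * T₁) ∧ lane' n t ≠ lane n t}
  have hD : ∀ n, ∀ t ∈ Set.Icc 0 T, lane' n t ≠ lane n t →
      ∃ e ∈ D, e ≤ t ∧ ∃ q : ℤ, e + τ₀ n = q * T₁ := by
    intro n t ht hne
    obtain ⟨e, he0, het, hq, hne'⟩ := hl.exists_event_of_ne hl' hT₁ hτ₀ ht.1 hne
    exact ⟨e, ⟨⟨he0, het.trans ht.2⟩, n, hq, hne'⟩, het, hq⟩
  have hDfin : D.Finite := (finite_events (T := T) hT₁ hτ₀).subset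
    fun t ht => ⟨ht.1, ht.2.imp fun n hn => hn.1⟩
  obtain ⟨e₁, he₁, -⟩ := hD n₁ t₁ ht₁ hne₁
  obtain ⟨a, ⟨haT, n, ⟨q, hq⟩, hne⟩, hmin⟩ :=
    Set.exists_min_image D id hDfin ⟨e₁, he₁⟩
  have hbefore : ∀ l, ∀ r ∈ Set.Ico 0 a, lane' l r = lane l r := by
    intro l r hra
    by_contra hne'
    obtain ⟨e, he, her, -⟩ := hD l r ⟨hra.1, hra.2.le.trans haT.2⟩ hne'
    exact absurd (hmin e he) (not_le.2 (her.trans_lt hra.2))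
  have hothers : ∀ l, l ≠ n → lane' l a = lane l a := by
    intro l hln
    by_contra hne'
    obtain ⟨e, he, hea, q', hq'⟩ := hD l a ⟨haT.1.le, haT.2⟩ hne'
    have : e = a := le_antisymm hea (hmin e he)
    subst this
    exact hln (event_inj hτ₀ hinj hq' hq)
  have hst := states_eq_of_lanes_eq hF haT.2 hη hη' hbefore a ⟨haT.1.le, le_rfl⟩
  have h1 := hr n a haT ⟨q, hq⟩
  have h2 := hr' n a haT ⟨q, hq⟩
  unfold RuleAt at h1 h2
  rw [hst, hbefore n _ ⟨le_max_left _ _, max_lt haT.1 (by linarith)⟩] at h2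
  exact hne (h2.unique (h1.congr hothers))

end Hybrid

/-- **Well-posedness of the finite-dimensional hybrid system `Σ₁`.**  For locally
Lipschitz kernels `H₁, H₂` of sub-linear growth, measurable controls valued in a compact
set `I ⊆ [0, U_max]`, and pairwise-distinct initial timers, the hybrid system `Σ₁` has a
unique trajectory on `[0, T]`; moreover the trajectories of both the autonomous and the
human-driven vehicles are Lipschitz continuous in time on every time interval on which
no lane change occurs. -/
theorem hybrid_system_wellposed
    (m : ℕ) (hm : 0 < m) (M N : ℕ) (hM : 0 < M) (hN : 0 < N)
    (T : ℝ) (hT : 0 < T) (Nτ : ℕ) (hNτ : 0 < Nτ) (Δ : ℝ) (hΔ : 0 < Δ)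
    (H₁ H₂ : ℝ → ℝ → ℝ)
    (hH₁lip : LocallyLipschitz (Function.uncurry H₁))
    (hH₂lip : LocallyLipschitz (Function.uncurry H₂))
    (C : ℝ) (hC : 0 < C)
    (hH₁g : ∀ a b, |H₁ a b| ≤ C * (1 + enorm2 a b))
    (hH₂g : ∀ a b, |H₂ a b| ≤ C * (1 + enorm2 a b))
    (Umax : ℝ) (hU : 0 < Umax)
    (I : Set ℝ) (hIcpt : IsCompact I) (hIsub : I ⊆ Set.Icc 0 Umax)
    (u : Fin M → ℝ → ℝ) (hum : ∀ k, Measurable (u k)) (huI : ∀ k t, u k t ∈ I)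
    (τ₀ : Veh M N → ℝ) (hτ₀ : ∀ n, τ₀ n ∈ Set.Ico 0 (T / (Nτ : ℝ)))
    (hτ₀inj : Function.Injective τ₀)
    (ι₀ : Veh M N → ℤ) (hι₀ : ∀ n, 1 ≤ ι₀ n ∧ ι₀ n ≤ (m : ℤ))
    (pos₀ vel₀ : Veh M N → ℝ) (hvel₀ : ∀ n, 0 ≤ vel₀ n) :
    ∃ (lane : Veh M N → ℝ → ℤ) (pos vel : Veh M N → ℝ → ℝ),
      IsHybridTraj H₁ H₂ m T (T / (Nτ : ℝ)) Δ u τ₀ ι₀ pos₀ vel₀ lane pos vel ∧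
      (∀ (lane' : Veh M N → ℝ → ℤ) (pos' vel' : Veh M N → ℝ → ℝ),
        IsHybridTraj H₁ H₂ m T (T / (Nτ : ℝ)) Δ u τ₀ ι₀ pos₀ vel₀ lane' pos' vel' →
        ∀ t ∈ Set.Icc (0 : ℝ) T, ∀ n,
          lane' n t = lane n t ∧ pos' n t = pos n t ∧ vel' n t = vel n t) ∧
      (∀ a b : ℝ, 0 ≤ a → a ≤ b → b ≤ T →
        (∀ n, ∀ s ∈ Set.Icc a b, ∀ r ∈ Set.Icc a b, lane n s = lane n r) →
        ∃ K : ℝ, ∀ n, ∀ s ∈ Set.Icc a b, ∀ r ∈ Set.Icc a b,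
          |pos n s - pos n r| ≤ K * |s - r| ∧ |vel n s - vel n r| ≤ K * |s - r|) := by
  set T₁ : ℝ := T / (Nτ : ℝ) with hT₁def
  have hT₁ : 0 < T₁ := div_pos hT (by exact_mod_cast hNτ)
  let c : Veh M N → ℝ → ℝ := Sum.elim u fun _ _ => 0
  let x₀ : Veh M N ⊕ Veh M N → ℝ := Sum.elim pos₀ vel₀
  have hcm : ∀ n, Measurable (c n) := by
    rintro (k | i)
    exacts [hum k, measurable_const]
  have hcU : ∀ n t, |c n t| ≤ Umax := by
    rintro (k | i) t
    · have := hIsub (huI k t)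
      simpa [c, abs_of_nonneg this.1] using this.2
    · simpa [c] using hU.le
  have hF : ∀ lane : Veh M N → ℝ → ℤ, (∀ n, Measurable (lane n)) →
      CaraRHS (hybRHS H₁ H₂ c lane) (4 * C + Umax) (14 * C + 1) := fun lane hl =>
    caraRHS_hybRHS hC hH₁lip hH₂lip hH₁g hH₂g hcm hU.le hcU hl
  have hfin := finite_events (T := T) hT₁ hτ₀
  obtain ⟨lane, hl, γ, hγc, hγ, hrule⟩ := exists_traj_of_finset (Δ := Δ) (x₀ := x₀) hτ₀ hτ₀inj
    hι₀ hT.le hT₁ hF hfin.toFinset fun a ha => hfin.mem_toFinset.1 ha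
  have hrule' : ∀ n, ∀ t ∈ Set.Ioc 0 T, (∃ q : ℤ, t + τ₀ n = q * T₁) →
      RuleAt H₁ H₂ m T₁ Δ c lane γ n t := fun n t ht hq =>
    hrule n t (hfin.mem_toFinset.2 ⟨ht, n, hq⟩) hq
  have hγ0 : ∀ i, γ 0 i = x₀ i := fun i => by
    simpa using hγ 0 ⟨le_rfl, hT.le⟩ i
  refine ⟨lane, fun n t => γ t (Sum.inl n), fun n t => γ t (Sum.inr n), ?_, ?_, ?_⟩
  · exact ⟨fun n => ⟨hl.init n, hγ0 _, hγ0 _⟩, hl.mem, hl.const,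
      fun n t ht => ⟨hγ t ht (Sum.inl n), hγ t ht (Sum.inr n)⟩, hrule'⟩
  · rintro lane' pos' vel' ⟨hinit, hmem, hconst, hdyn, hr'⟩
    have hl' : LaneOK m T₁ τ₀ ι₀ lane' := ⟨fun n => (hinit n).1, hmem, hconst⟩
    let η : ℝ → Veh M N ⊕ Veh M N → ℝ := fun t =>
      Sum.elim (fun n => pos' n t) (fun n => vel' n t)
    have hη : IntSol (hybRHS H₁ H₂ c lane') x₀ T η := by
      rintro t ht (n | n)
      exacts [(hdyn n t ht).1, (hdyn n t ht).2]
    have hlanes := lanes_unique hτ₀ hτ₀inj hT₁ hl hl' (hF _ (hl.measurable hT₁)) hγ hη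
      hrule' hr'
    have hst := states_eq_of_lanes_eq (hF _ (hl.measurable hT₁)) le_rfl hγ hη
      fun n r hr => hlanes n r ⟨hr.1, hr.2.le⟩
    intro t ht n
    exact ⟨hlanes n t ht, congrFun (hst t ht) (Sum.inl n), congrFun (hst t ht) (Sum.inr n)⟩
  · intro a b ha _ hb _
    obtain ⟨K, hK⟩ := (hF _ (hl.measurable hT₁)).exists_lipschitz hγc hγ
    refine ⟨K, fun n s hs r hr => ?_⟩
    have hs' : s ∈ Set.Icc 0 T := ⟨ha.trans hs.1, hs.2.trans hb⟩
    have hr' : r ∈ Set.Icc 0 T := ⟨ha.trans hr.1, hr.2.trans hb⟩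
    exact ⟨hK s hs' r hr' _, hK s hs' r hr' _⟩
end
end
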